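/- arXiv:1803.05811 — 9 statements merged into one kernel-verified Lean document; each statement's English description precedes it below -/
import Mathlib

section
/- Let X and U be Polish spaces, let G be a Borel measurable subset of X × U, and let v : X × U → ℝ be Borel measurable. Define κ : X → ℝ ∪ {+∞} by κ(x) = inf{ v(x,u) : (x,u) ∈ G } (with the infimum over the empty set equal to +∞). Then κ is lower semi-analytic, i.e., { x : κ(x) < c } is analytic for every real c; in particular κ is universally measurable. -/
open MeasureTheory

lemma aux_compact_open (b : ℕ → ℕ) (W : Set (ℕ → ℕ)) (hW : IsOpen W)
    (hC : {σ : ℕ → ℕ | ∀ i, σ i ≤ b i} ⊆ W) :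
    ∃ n, {σ : ℕ → ℕ | ∀ i < n, σ i ≤ b i} ⊆ W := by
  by_contra! hcon
  have h1 : ∀ n, ∃ σ : ℕ → ℕ, (∀ i < n, σ i ≤ b i) ∧ σ ∉ W := by
    intro n
    obtain ⟨σ, h, h'⟩ := Set.not_subset.1 (hcon n)
    exact ⟨σ, h, h'⟩
  choose σ hσ hσW using h1
  have hcomp : IsCompact {σ : ℕ → ℕ | ∀ i, σ i ≤ b i} := by
    have := isCompact_pi_infinite (s := fun i => Set.Iic (b i))
      (fun i => (Set.finite_Iic (b i)).isCompact)
    simpa using this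
  obtain ⟨τ, hτ, φ, hφ, hlim⟩ := hcomp.tendsto_subseq
    (x := fun n i => min (σ n i) (b i)) (fun n i => min_le_right _ _)
  have hlim2 : Filter.Tendsto (fun n => σ (φ n)) Filter.atTop (nhds τ) := by
    rw [tendsto_pi_nhds] at hlim ⊢
    intro i
    refine (hlim i).congr' ?_
    filter_upwards [Filter.eventually_gt_atTop i] with n hn
    exact min_eq_left (hσ (φ n) i (hn.trans_le (hφ.id_le n)))
  obtain ⟨n, hn⟩ := (hlim2.eventually (hW.mem_nhds (hC hτ))).exists
  exact hσW _ hn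

lemma aux_compact_approx {X : Type*} [TopologicalSpace X] [PolishSpace X] [MeasurableSpace X]
    [BorelSpace X] (μ : Measure X) [IsFiniteMeasure μ] (f : (ℕ → ℕ) → X) (hf : Continuous f)
    (c : ENNReal) (hc : c < μ (Set.range f)) :
    ∃ K ⊆ Set.range f, IsCompact K ∧ c ≤ μ K := by
  have step : ∀ (n : ℕ) (P : Set (ℕ → ℕ)), c < μ (f '' P) →
      ∃ k : ℕ, c < μ (f '' (P ∩ {σ | σ n ≤ k})) := by
    intro n P hP
    have hU : f '' P = ⋃ k : ℕ, f '' (P ∩ {σ | σ n ≤ k}) := by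
      rw [← Set.image_iUnion, ← Set.inter_iUnion]
      congr 1
      ext σ
      simp only [Set.mem_inter_iff, Set.mem_iUnion, Set.mem_setOf_eq]
      exact ⟨fun h => ⟨h, σ n, le_rfl⟩, fun h => h.1⟩
    have hm : Monotone fun k : ℕ => f '' (P ∩ {σ | σ n ≤ k}) := by
      intro k l hkl
      exact Set.image_mono (Set.inter_subset_inter_right _ fun σ h => le_trans h hkl)
    rw [hU, hm.measure_iUnion] at hP
    exact lt_iSup_iff.1 hP
  choose k hk using step
  let P : ℕ → {P : Set (ℕ → ℕ) // c < μ (f '' P)} := fun n =>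
    Nat.rec ⟨Set.univ, by rwa [Set.image_univ]⟩
      (fun n P => ⟨P.1 ∩ {σ | σ n ≤ k n P.1 P.2}, hk n P.1 P.2⟩) n
  let b : ℕ → ℕ := fun n => k n (P n).1 (P n).2
  have hP : ∀ n, (P n).1 = {σ : ℕ → ℕ | ∀ i < n, σ i ≤ b i} := by
    intro n
    induction n with
    | zero => ext σ; simp [P]
    | succ n ih =>
      have : (P (n+1)).1 = (P n).1 ∩ {σ | σ n ≤ b n} := rfl
      rw [this, ih]
      ext σ
      simp only [Set.mem_inter_iff, Set.mem_setOf_eq, Nat.lt_succ_iff_lt_or_eq]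
      constructor
      · rintro ⟨h1, h2⟩ i (hi | rfl)
        · exact h1 i hi
        · exact h2
      · exact fun h => ⟨fun i hi => h i (Or.inl hi), h n (Or.inr rfl)⟩
  have hcomp : IsCompact {σ : ℕ → ℕ | ∀ i, σ i ≤ b i} := by
    have := isCompact_pi_infinite (s := fun i => Set.Iic (b i))
      (fun i => (Set.finite_Iic (b i)).isCompact)
    simpa using this
  letI := TopologicalSpace.upgradeIsCompletelyMetrizable X
  refine ⟨f '' {σ | ∀ i, σ i ≤ b i}, Set.image_subset_range _ _, hcomp.image hf, ?_⟩
  rw [Set.measure_eq_iInf_isOpen]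
  refine le_iInf fun V => le_iInf fun hV => le_iInf fun hVo => ?_
  obtain ⟨n, hn⟩ := aux_compact_open b (f ⁻¹' V) (hVo.preimage hf) (Set.image_subset_iff.1 hV)
  rw [← hP n] at hn
  exact (P n).2.le.trans (measure_mono (Set.image_subset_iff.2 hn))

lemma aux_analytic_nullMeasurable {X : Type*} [TopologicalSpace X] [PolishSpace X]
    [MeasurableSpace X] [BorelSpace X] (μ : Measure X) [IsFiniteMeasure μ] (A : Set X)
    (hA : AnalyticSet A) : NullMeasurableSet A μ := by
  rw [AnalyticSet] at hA
  rcases hA with rfl | ⟨f, hf, rfl⟩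
  · exact MeasurableSet.empty.nullMeasurableSet
  by_cases h0 : μ (Set.range f) = 0
  · exact NullMeasurableSet.of_null h0
  obtain ⟨u, -, hu, hlim⟩ := exists_seq_strictMono_tendsto' (pos_iff_ne_zero.2 h0)
  choose K hKs hKc hK using fun n => aux_compact_approx μ f hf (u n) (hu n).2
  have hB : MeasurableSet (⋃ n, K n) := MeasurableSet.iUnion fun n => (hKc n).measurableSet
  have hBA : (⋃ n, K n) ⊆ Set.range f := Set.iUnion_subset hKs
  have hle : μ (Set.range f) ≤ μ (⋃ n, K n) :=
    le_of_tendsto' hlim fun n => (hK n).trans (measure_mono (Set.subset_iUnion K n))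
  have := ae_eq_of_subset_of_measure_ge hBA hle hB.nullMeasurableSet (measure_ne_top _ _)
  exact hB.nullMeasurableSet.congr this

/-- Let `X`, `U` be Polish spaces, `G ⊆ X × U` Borel, and
`v : X × U → ℝ` Borel measurable.  Define
`κ x = inf { v (x,u) : (x,u) ∈ G }` (in `EReal`, `inf ∅ = +∞`).  Then `κ` is
lower semi-analytic (every sublevel set `{x | κ x < c}`, `c ∈ ℝ`, is analytic);
in particular `κ` is universally measurable (each sublevel set is null
measurable for every finite Borel measure). -/
theorem lower_semianalytic_of_inf_section
    {X U : Type*}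
    [TopologicalSpace X] [PolishSpace X] [MeasurableSpace X] [BorelSpace X]
    [TopologicalSpace U] [PolishSpace U] [MeasurableSpace U] [BorelSpace U]
    (G : Set (X × U)) (hG : MeasurableSet G)
    (v : X × U → ℝ) (hv : Measurable v)
    (κ : X → EReal)
    (hκ : ∀ x, κ x = ⨅ u ∈ {u : U | (x, u) ∈ G}, (v (x, u) : EReal)) :
    (∀ c : ℝ, MeasureTheory.AnalyticSet {x : X | κ x < (c : EReal)}) ∧
      (∀ c : ℝ, ∀ μ : Measure X, IsFiniteMeasure μ →
        NullMeasurableSet {x : X | κ x < (c : EReal)} μ) := by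
  have h1 : ∀ c : ℝ, MeasureTheory.AnalyticSet {x : X | κ x < (c : EReal)} := by
    intro c
    have : {x : X | κ x < (c : EReal)} = Prod.fst '' (G ∩ {p | v p < c}) := by
      ext x
      simp only [Set.mem_setOf_eq, hκ, iInf_lt_iff, EReal.coe_lt_coe_iff, Set.mem_image,
        Set.mem_inter_iff]
      constructor
      · rintro ⟨u, hu, h⟩
        exact ⟨(x, u), ⟨hu, h⟩, rfl⟩
      · rintro ⟨⟨y, u⟩, ⟨hu, h⟩, rfl⟩
        exact ⟨u, hu, h⟩
    rw [this]
    exact (hG.inter (measurableSet_lt hv measurable_const)).analyticSet.image_of_continuous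
      continuous_fst
  exact ⟨h1, fun c μ _ => aux_analytic_nullMeasurable μ _ (h1 c)⟩
end

section
/- Let E₁ and E₂ be Polish spaces and let D ⊆ E₁ × E₂ be a Borel set whose section over e₁ ∈ E₁ is E₂(e₁) = { e₂ : (e₁,e₂) ∈ D }. Let g : E₁ × E₂ → ℝ ∪ {+∞} be lower semi-analytic. Then the function h(e₁) = inf{ g(e₁,e₂) : e₂ ∈ E₂(e₁) } (with inf over the empty set equal to +∞) is lower semi-analytic on E₁. -/
open MeasureTheory

/-- Let `E₁`, `E₂` be Polish spaces, `D ⊆ E₁ × E₂` Borel with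
sections `E₂(e₁) = {e₂ | (e₁,e₂) ∈ D}`, and let `g : E₁ × E₂ → ℝ ∪ {+∞}` be
lower semi-analytic.  Then `h e₁ = inf { g (e₁,e₂) : e₂ ∈ E₂(e₁) }`
(with `inf ∅ = +∞`) is lower semi-analytic on `E₁`. -/
theorem lower_semianalytic_partial_inf
    {E₁ E₂ : Type*}
    [TopologicalSpace E₁] [PolishSpace E₁] [MeasurableSpace E₁] [BorelSpace E₁]
    [TopologicalSpace E₂] [PolishSpace E₂] [MeasurableSpace E₂] [BorelSpace E₂]
    (D : Set (E₁ × E₂)) (hD : MeasurableSet D)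
    (g : E₁ × E₂ → EReal)
    (hg : ∀ c : ℝ, MeasureTheory.AnalyticSet {p : E₁ × E₂ | g p < (c : EReal)})
    (h : E₁ → EReal)
    (hh : ∀ e₁, h e₁ = ⨅ e₂ ∈ {e₂ : E₂ | (e₁, e₂) ∈ D}, g (e₁, e₂)) :
    ∀ c : ℝ, MeasureTheory.AnalyticSet {e₁ : E₁ | h e₁ < (c : EReal)} := by
  intro c
  have key : {e₁ : E₁ | h e₁ < (c : EReal)}
      = Prod.fst '' (⋂ b : Bool, cond b D {p : E₁ × E₂ | g p < (c : EReal)}) := by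
    ext e
    simp only [Set.mem_setOf_eq, hh, iInf_lt_iff, Set.mem_image, Set.mem_iInter, Bool.forall_bool,
      cond_true, cond_false, Prod.exists]
    constructor
    · rintro ⟨y, hy, hlt⟩
      exact ⟨e, y, ⟨hlt, hy⟩, rfl⟩
    · rintro ⟨a, y, ⟨hlt, hy⟩, rfl⟩
      exact ⟨y, hy, hlt⟩
  rw [key]
  refine AnalyticSet.image_of_continuous (AnalyticSet.iInter ?_) continuous_fst
  intro b
  cases b
  · exact hg c
  · exact hD.analyticSet
end

section
/- Let X be a Polish space and U a compact metrizable space, and let c : X × U → ℝ be such that u ↦ c(x,u) is continuous for every x ∈ X and x ↦ c(x,u) is Borel measurable for every u ∈ U. Then there exists a Borel measurable function f : X → U such that c(x, f(x)) = min_{u ∈ U} c(x,u) for every x ∈ X; moreover x ↦ min_{u ∈ U} c(x,u) is Borel measurable. -/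
open MeasureTheory

theorem aux_measurable_iInf {X V : Type*} [MeasurableSpace X] [TopologicalSpace V]
    [CompactSpace V] [TopologicalSpace.SeparableSpace V] [Nonempty V] (g : X → V → ℝ)
    (hc : ∀ x, Continuous (g x)) (hm : ∀ v, Measurable fun x => g x v) :
    Measurable fun x => ⨅ v, g x v := by
  have h : (fun x => ⨅ v, g x v) =
      fun x => ⨅ n : ℕ, g x (TopologicalSpace.denseSeq V n) := by
    funext x
    have hb : BddBelow (Set.range (g x)) := (isCompact_range (hc x)).bddBelow
    have hb' : BddBelow (Set.range fun n : ℕ => g x (TopologicalSpace.denseSeq V n)) :=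
      hb.mono (by rintro _ ⟨n, rfl⟩; exact ⟨_, rfl⟩)
    apply le_antisymm
    · exact le_ciInf fun n => ciInf_le hb _
    · refine le_ciInf fun v => ?_
      have hcl : IsClosed {v | ⨅ n : ℕ, g x (TopologicalSpace.denseSeq V n) ≤ g x v} :=
        isClosed_le continuous_const (hc x)
      exact (TopologicalSpace.denseRange_denseSeq V).induction_on
        (p := fun v => ⨅ n : ℕ, g x (TopologicalSpace.denseSeq V n) ≤ g x v) v hcl
        (fun n => ciInf_le hb' n)
  rw [h]
  exact Measurable.iInf fun n => hm _

theorem aux_selection {X : Type*} [MeasurableSpace X] (K : Set ℝ) [CompactSpace K] [Nonempty K]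
    (g : X → K → ℝ)
    (hc : ∀ x, Continuous (g x)) (hm : ∀ v, Measurable fun x => g x v) :
    ∃ f : X → K, Measurable f ∧ ∀ x v, g x (f x) ≤ g x v := by
  have hb : ∀ x, BddBelow (Set.range (g x)) := fun x => (isCompact_range (hc x)).bddBelow
  have key : ∀ x, ∃ v : K, (∀ w, g x v ≤ g x w) ∧
      ∀ v' : K, (∀ w, g x v' ≤ g x w) → (v : ℝ) ≤ v' := by
    intro x
    have hcl : IsClosed {v : K | ∀ w, g x v ≤ g x w} := by
      simp only [Set.setOf_forall]
      exact isClosed_iInter fun w => isClosed_le (hc x) continuous_const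
    obtain ⟨v₀, -, hv₀⟩ := isCompact_univ.exists_isMinOn (Set.univ_nonempty (α := K))
      (hc x).continuousOn
    obtain ⟨v, hv, hv'⟩ := hcl.isCompact.exists_isMinOn
      ⟨v₀, fun w => hv₀ (Set.mem_univ w)⟩ continuous_subtype_val.continuousOn
    exact ⟨v, hv, fun v' h => hv' h⟩
  choose f hf hf' using key
  refine ⟨f, ?_, hf⟩
  suffices h : Measurable fun x => (f x : ℝ) from h.subtype_mk (h := fun x => (f x).2)
  refine measurable_of_Iic fun t => ?_
  let Z : Set K := {v | (v : ℝ) ≤ t}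
  have hZ : IsClosed Z := isClosed_le continuous_subtype_val continuous_const
  have : CompactSpace Z := isCompact_iff_compactSpace.1 hZ.isCompact
  rcases isEmpty_or_nonempty Z with hE | hN
  · convert! MeasurableSet.empty
    ext x
    simp only [Set.mem_preimage, Set.mem_Iic, Set.mem_empty_iff_false, iff_false]
    exact fun h => hE.false ⟨f x, h⟩
  · have hcZ : ∀ x, Continuous fun z : Z => g x z :=
      fun x => (hc x).comp continuous_subtype_val
    have h1 := aux_measurable_iInf g hc hm
    have h2 := aux_measurable_iInf (fun x (z : Z) => g x z) hcZ (fun z => hm z)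
    convert! measurableSet_le h2 h1
    ext x
    simp only [Set.mem_preimage, Set.mem_Iic, Set.mem_setOf_eq]
    constructor
    · intro h
      refine (ciInf_le (isCompact_range (hcZ x)).bddBelow ⟨f x, h⟩).trans ?_
      exact le_ciInf fun w => hf x w
    · intro h
      obtain ⟨z, -, hz⟩ := isCompact_univ.exists_isMinOn (Set.univ_nonempty (α := Z))
        (hcZ x).continuousOn
      have hz' : g x z ≤ ⨅ z : Z, g x z := le_ciInf fun w => hz (Set.mem_univ w)
      exact (hf' x z fun w => (hz'.trans h).trans (ciInf_le (hb x) w)).trans z.2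

/-- Let `X` be Polish and `U` compact metrizable (nonempty),
and `c : X × U → ℝ` continuous in `u` for each `x` and Borel measurable in `x`
for each `u`.  Then there is a Borel measurable `f : X → U` with
`c (x, f x) = min_{u} c (x, u)` for every `x`; moreover `x ↦ min_u c (x,u)` is
Borel measurable. -/
theorem exists_measurable_argmin
    {X U : Type*}
    [TopologicalSpace X] [PolishSpace X] [MeasurableSpace X] [BorelSpace X]
    [TopologicalSpace U] [CompactSpace U] [TopologicalSpace.MetrizableSpace U] [Nonempty U]
    [MeasurableSpace U] [BorelSpace U]
    (c : X × U → ℝ)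
    (hc_cont : ∀ x : X, Continuous fun u : U => c (x, u))
    (hc_meas : ∀ u : U, Measurable fun x : X => c (x, u)) :
    ∃ f : X → U, Measurable f ∧
      (∀ x : X, ∀ u : U, c (x, f x) ≤ c (x, u)) ∧
      (∀ x : X, c (x, f x) = ⨅ u : U, c (x, u)) ∧
      Measurable fun x : X => ⨅ u : U, c (x, u) := by
  letI := TopologicalSpace.metrizableSpaceMetric U
  obtain ⟨p, hp, hps⟩ := exists_nat_bool_continuous_surjective_of_compact U
  have : CompactSpace cantorSet := isCompact_iff_compactSpace.1 isCompact_cantorSet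
  have : Nonempty cantorSet := ⟨⟨0, zero_mem_cantorSet⟩⟩
  let q : cantorSet → U := fun v => p (cantorSetHomeomorphNatToBool v)
  have hq : Continuous q := hp.comp cantorSetHomeomorphNatToBool.continuous
  have hqs : Function.Surjective q := hps.comp cantorSetHomeomorphNatToBool.surjective
  obtain ⟨f, hfm, hf⟩ := aux_selection cantorSet (fun x v => c (x, q v))
    (fun x => (hc_cont x).comp hq) (fun v => hc_meas _)
  have hle : ∀ x u, c (x, q (f x)) ≤ c (x, u) := by
    intro x u
    obtain ⟨v, rfl⟩ := hqs u
    exact hf x v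
  refine ⟨fun x => q (f x), hq.measurable.comp hfm, hle, fun x => ?_,
    aux_measurable_iInf (fun x u => c (x, u)) hc_cont hc_meas⟩
  exact le_antisymm (le_ciInf (hle x)) (ciInf_le (isCompact_range (hc_cont x)).bddBelow _)
end

section
/- Let k > 0 and let X and W be independent random variables each uniformly distributed on {−1, 1}. For functions γ₀ : {−1,1} → ℝ and Borel measurable γ₁ : ℝ → ℝ define J(γ₀, γ₁) = E[ k·(γ₀(X) − X)² + (γ₁(γ₀(X) + W) − γ₀(X))² ]. Then inf over all such pairs (γ₀, γ₁) of J(γ₀, γ₁) equals 0, while J(γ₀, γ₁) > 0 for every pair (γ₀, γ₁). Consequently no optimal policy exists for this two-decision-maker team problem. -/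
open MeasureTheory

/-- The expected cost in the discrete (two-point) version of Witsenhausen's
counterexample: `X` and `W` are independent, uniform on `{-1, 1}`; the first
decision maker applies `u₀ = γ₀ X`, the second observes `γ₀ X + W` and applies
`u₁ = γ₁ (γ₀ X + W)`; the cost is `k (u₀ - X)² + (u₁ - u₀)²`.  The expectation
is the average over the four equally likely outcomes `(X, W) ∈ {-1,1}²`. -/
noncomputable def discreteWitCost (k : ℝ) (γ₀ γ₁ : ℝ → ℝ) : ℝ :=
  (1 / 4) *
    ((k * (γ₀ 1 - 1) ^ 2 + (γ₁ (γ₀ 1 + 1) - γ₀ 1) ^ 2) +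
     (k * (γ₀ 1 - 1) ^ 2 + (γ₁ (γ₀ 1 + (-1)) - γ₀ 1) ^ 2) +
     (k * (γ₀ (-1) - (-1)) ^ 2 + (γ₁ (γ₀ (-1) + 1) - γ₀ (-1)) ^ 2) +
     (k * (γ₀ (-1) - (-1)) ^ 2 + (γ₁ (γ₀ (-1) + (-1)) - γ₀ (-1)) ^ 2))

/-- For every `k > 0`, the infimum of the expected cost over
all pairs `(γ₀, γ₁)` (with `γ₁` Borel measurable) equals `0`, while every pair
has strictly positive cost: no optimal policy exists for this
two-decision-maker team problem. -/
theorem discrete_witsenhausen_no_optimal (k : ℝ) (hk : 0 < k) :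
    sInf {r : ℝ | ∃ γ₀ γ₁ : ℝ → ℝ, Measurable γ₁ ∧ r = discreteWitCost k γ₀ γ₁}
        = 0 ∧
      ∀ γ₀ γ₁ : ℝ → ℝ, Measurable γ₁ → 0 < discreteWitCost k γ₀ γ₁ := by
  have pos : ∀ γ₀ γ₁ : ℝ → ℝ, 0 < discreteWitCost k γ₀ γ₁ := by
    intro γ₀ γ₁
    unfold discreteWitCost
    by_cases h1 : γ₀ 1 = 1
    · by_cases h2 : γ₀ (-1) = -1
      · rw [h1, h2]
        norm_num
        nlinarith [sq_nonneg (γ₁ 0), sq_nonneg (γ₁ 2 - 1), sq_nonneg (γ₁ (-2) + 1)]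
      · have : 0 < k * (γ₀ (-1) - (-1)) ^ 2 :=
          mul_pos hk (sq_pos_iff.mpr (sub_ne_zero.mpr h2))
        positivity
    · have : 0 < k * (γ₀ 1 - 1) ^ 2 :=
        mul_pos hk (sq_pos_iff.mpr (sub_ne_zero.mpr h1))
      positivity
  refine ⟨?_, fun γ₀ γ₁ _ => pos γ₀ γ₁⟩
  have hset : {r : ℝ | ∃ γ₀ γ₁ : ℝ → ℝ, Measurable γ₁ ∧ r = discreteWitCost k γ₀ γ₁}
      = Set.Ioi 0 := by
    ext r
    constructor
    · rintro ⟨γ₀, γ₁, _, rfl⟩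
      exact pos γ₀ γ₁
    · intro hr
      have hr : 0 < r := hr
      obtain ⟨e, he, hee⟩ : ∃ e : ℝ, 0 < e ∧ e ^ 2 = 2 * r / k :=
        ⟨√(2 * r / k), Real.sqrt_pos.mpr (by positivity), Real.sq_sqrt (by positivity)⟩
      refine ⟨fun x => if x = 1 then 1 + e else -1, fun y => if 0 < y then 1 + e else -1,
        Measurable.ite measurableSet_Ioi measurable_const measurable_const, ?_⟩
      have h1 : (0:ℝ) < 1 + e + 1 := by linarith
      have h2 : (0:ℝ) < 1 + e + -1 := by linarith
      have h3 : ¬ ((-1:ℝ) = 1) := by norm_num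
      have h4 : ¬ ((0:ℝ) < -1 + 1) := by norm_num
      have h5 : ¬ ((0:ℝ) < -1 + -1) := by norm_num
      unfold discreteWitCost
      simp only [if_true, if_neg h3, if_pos h1, if_pos h2, if_neg h4, if_neg h5]
      have : k * e ^ 2 = 2 * r := by rw [hee]; field_simp
      linear_combination (-1 / 2) * this
  rw [hset, csInf_Ioi]
end

section
/- Consider a static team with N decision makers and independent measurements in which each action space Uⁱ is a compact metrizable space and the cost c : Ω₀ × ∏ᵢYⁱ × ∏ᵢUⁱ → [0,∞) is continuous and bounded. Then an optimal team policy exists: there are Borel measurable maps γⁱ : Yⁱ → Uⁱ, i = 1,…,N, such that J(γ¹,…,γᴺ) = inf J over all tuples of Borel measurable policies. -/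
open MeasureTheory

theorem team_selection {Y U : Type*} [TopologicalSpace Y] [MeasurableSpace Y] [BorelSpace Y]
    [TopologicalSpace U] [CompactSpace U] [TopologicalSpace.MetrizableSpace U] [Nonempty U]
    [MeasurableSpace U] [BorelSpace U] (g : Y × U → ℝ) (hg : Continuous g) :
    ∃ γ : Y → U, Measurable γ ∧ ∀ y u, g (y, γ y) ≤ g (y, u) := by
  let _ := TopologicalSpace.metrizableSpaceMetric U
  obtain ⟨h0, h0c, h0s⟩ := exists_nat_bool_continuous_surjective_of_compact U
  let h : cantorSet → U := h0 ∘ cantorSetHomeomorphNatToBool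
  have hc : Continuous h := h0c.comp cantorSetHomeomorphNatToBool.continuous
  have hs : Function.Surjective h := h0s.comp cantorSetHomeomorphNatToBool.surjective
  have : CompactSpace cantorSet := cantorSetHomeomorphNatToBool.symm.compactSpace
  have : Nonempty cantorSet := ⟨cantorSetHomeomorphNatToBool.symm (fun _ => true)⟩
  let B : Set (Y × cantorSet) := {p | ∀ k', g (p.1, h p.2) ≤ g (p.1, h k')}
  have hB : IsClosed B := by
    have : B = ⋂ k', {p : Y × cantorSet | g (p.1, h p.2) ≤ g (p.1, h k')} := by
      ext p; simp [B]
    rw [this]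
    exact isClosed_iInter fun k' => isClosed_le (by fun_prop) (by fun_prop)
  have hleast : ∀ y, ∃ k, IsLeast {k | (y, k) ∈ B} k := by
    intro y
    apply IsCompact.exists_isLeast
    · exact (hB.preimage (by fun_prop : Continuous fun k : cantorSet => (y, k))).isCompact
    · obtain ⟨k, -, hk⟩ := isCompact_univ.exists_isMinOn (Set.univ_nonempty (α := cantorSet))
        (f := fun k => g (y, h k)) (by fun_prop : Continuous fun k => g (y, h k)).continuousOn
      exact ⟨k, fun k' => hk (Set.mem_univ k')⟩
  choose s hsl using hleast
  have hsm : Measurable s := by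
    apply Measurable.subtype_mk (f := fun y => (s y : ℝ))
    apply measurable_of_Iic
    intro t
    have : (fun y => (s y : ℝ)) ⁻¹' Set.Iic t
        = Prod.fst '' (B ∩ {p : Y × cantorSet | (p.2 : ℝ) ≤ t}) := by
      ext y
      constructor
      · intro hy
        exact ⟨(y, s y), ⟨(hsl y).1, hy⟩, rfl⟩
      · rintro ⟨⟨y', k⟩, ⟨h1, h2⟩, rfl⟩
        have : s y' ≤ k := (hsl y').2 h1
        exact le_trans (Subtype.coe_le_coe.2 this) h2
    rw [this]
    refine (isClosedMap_fst_of_compactSpace _ (hB.inter ?_)).measurableSet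
    exact isClosed_le (by fun_prop) (by fun_prop)
  refine ⟨h ∘ s, hc.measurable.comp hsm, fun y u => ?_⟩
  obtain ⟨k, rfl⟩ := hs u
  exact (hsl y).1 k

theorem team_pi_update {ι : Type*} [Fintype ι] [DecidableEq ι] {Z : ι → Type*}
    [∀ i, MeasurableSpace (Z i)] (P : ∀ i, Measure (Z i)) [∀ i, IsProbabilityMeasure (P i)]
    (i : ι) (P' : Measure (Z i)) [IsProbabilityMeasure P'] :
    ((Measure.pi P).prod P').map (fun p => Function.update p.1 i p.2)
      = Measure.pi (Function.update P i P') := by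
  have : ∀ j, IsProbabilityMeasure (Function.update P i P' j) := by
    intro j
    by_cases h : j = i
    · subst h; simpa
    · rw [Function.update_of_ne h]; infer_instance
  symm
  apply Measure.pi_eq
  intro s hs
  have hm : Measurable (fun p : (∀ i, Z i) × Z i => Function.update p.1 i p.2) := by
    rw [measurable_pi_iff]
    intro j
    by_cases h : j = i
    · subst h; simpa using measurable_snd
    · simp only [Function.update_of_ne h]; fun_prop
  rw [Measure.map_apply hm (MeasurableSet.univ_pi hs)]
  have : (fun p : (∀ i, Z i) × Z i => Function.update p.1 i p.2) ⁻¹' (Set.univ.pi s)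
      = (Set.univ.pi (Function.update s i Set.univ)) ×ˢ s i := by
    ext ⟨z, w⟩
    simp only [Set.mem_preimage, Set.mem_pi, Set.mem_univ, true_imp_iff, Set.mem_prod]
    constructor
    · intro H
      refine ⟨fun j => ?_, by simpa using H i⟩
      by_cases h : j = i
      · subst h; simp
      · simpa [h] using H j
    · rintro ⟨H, H'⟩ j
      by_cases h : j = i
      · subst h; simpa using H'
      · simpa [h] using H j
  rw [this, Measure.prod_prod, Measure.pi_pi, ← Finset.mul_prod_erase _ _ (Finset.mem_univ i),
    ← Finset.mul_prod_erase Finset.univ (fun j => Function.update P i P' j (s j)) (Finset.mem_univ i)]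
  simp only [Function.update_self, measure_univ, one_mul]
  rw [mul_comm]
  congr 1
  apply Finset.prod_congr rfl
  intro j hj
  have h : j ≠ i := Finset.ne_of_mem_erase hj
  simp [h]

theorem team_compact {Y U : Type*} [TopologicalSpace Y] [PolishSpace Y] [MeasurableSpace Y]
    [BorelSpace Y]
    [TopologicalSpace U] [CompactSpace U] [TopologicalSpace.MetrizableSpace U]
    [MeasurableSpace U] [BorelSpace U] (Q : ProbabilityMeasure Y) :
    IsCompact {P : ProbabilityMeasure (Y × U) | P.map measurable_fst.aemeasurable = Q} := by
  let _ := TopologicalSpace.metrizableSpaceMetric U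
  have hcl : IsClosed {P : ProbabilityMeasure (Y × U) |
      P.map measurable_fst.aemeasurable = Q} :=
    isClosed_eq (ProbabilityMeasure.continuous_map continuous_fst) continuous_const
  rw [← hcl.closure_eq]
  apply isCompact_closure_of_isTightMeasureSet
  let _ := TopologicalSpace.upgradeIsCompletelyMetrizable Y
  apply IsTightMeasureSet.prodMk
  · refine (isTightMeasureSet_singleton (μ := (Q : Measure Y))).subset ?_
    rintro _ ⟨_, ⟨P, hP, rfl⟩, rfl⟩
    have := congrArg ProbabilityMeasure.toMeasure hP
    simpa [Measure.fst] using this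
  · exact IsTightMeasureSet.of_compactSpace

theorem team_measurable_update {ι : Type*} [DecidableEq ι] {Z : ι → Type*}
    [∀ i, MeasurableSpace (Z i)] (i : ι) :
    Measurable (fun p : (∀ i, Z i) × Z i => Function.update p.1 i p.2) := by
  rw [measurable_pi_iff]
  intro j
  by_cases h : j = i
  · subst h; simpa using measurable_snd
  · simp only [Function.update_of_ne h]; fun_prop

theorem team_fubini {ι Ω : Type*} [Fintype ι] [DecidableEq ι] {Z : ι → Type*}
    [MeasurableSpace Ω] (μ : Measure Ω) [IsProbabilityMeasure μ]
    [∀ i, MeasurableSpace (Z i)] (P : ∀ i, Measure (Z i)) [∀ i, IsProbabilityMeasure (P i)]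
    (i : ι) (P' : Measure (Z i)) [IsProbabilityMeasure P']
    (f : Ω × (∀ i, Z i) → ℝ) (hf : Measurable f) (C : ℝ) (hC : ∀ x, ‖f x‖ ≤ C) :
    ∫ x, f x ∂(μ.prod (Measure.pi (Function.update P i P')))
      = ∫ w, (∫ x, f (x.1, Function.update x.2 i w) ∂(μ.prod (Measure.pi P))) ∂P' := by
  have hm := team_measurable_update (Z := Z) i
  have hm2 : Measurable (fun p : (Ω × (∀ i, Z i)) × Z i =>
      f (p.1.1, Function.update p.1.2 i p.2)) :=
    hf.comp ((measurable_fst.comp measurable_fst).prodMk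
      (hm.comp ((measurable_snd.comp measurable_fst).prodMk measurable_snd)))
  rw [← integral_prod_symm (f := fun p : (Ω × (∀ i, Z i)) × Z i =>
      f (p.1.1, Function.update p.1.2 i p.2))]
  · rw [← team_pi_update P i P']
    have e1 : μ.prod (((Measure.pi P).prod P').map (fun p => Function.update p.1 i p.2))
        = (μ.prod ((Measure.pi P).prod P')).map
          (Prod.map id (fun p : (∀ i, Z i) × Z i => Function.update p.1 i p.2)) := by
      rw [← Measure.map_prod_map _ _ measurable_id hm, Measure.map_id]
    rw [e1, integral_map (measurable_id.prodMap hm).aemeasurable hf.aestronglyMeasurable,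
      ← (measurePreserving_prodAssoc μ (Measure.pi P) P').map_eq,
      integral_map (f := fun x => f (Prod.map id
          (fun p : (∀ i, Z i) × Z i => Function.update p.1 i p.2) x))
        MeasurableEquiv.prodAssoc.measurable.aemeasurable
        (hf.comp (measurable_id.prodMap hm)).aestronglyMeasurable]
    rfl
  · exact Integrable.of_bound hm2.aestronglyMeasurable C (ae_of_all _ fun _ => hC _)

theorem team_purify {ι Ω : Type*} [Fintype ι] [DecidableEq ι] {Y U : ι → Type*}
    [TopologicalSpace Ω] [PolishSpace Ω] [MeasurableSpace Ω] [BorelSpace Ω]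
    [∀ i, TopologicalSpace (Y i)] [∀ i, PolishSpace (Y i)]
    [∀ i, MeasurableSpace (Y i)] [∀ i, BorelSpace (Y i)]
    [∀ i, TopologicalSpace (U i)] [∀ i, CompactSpace (U i)]
    [∀ i, TopologicalSpace.MetrizableSpace (U i)] [∀ i, Nonempty (U i)]
    [∀ i, SecondCountableTopology (U i)]
    [∀ i, MeasurableSpace (U i)] [∀ i, BorelSpace (U i)]
    (μ : Measure Ω) [IsProbabilityMeasure μ]
    (P : ∀ i, Measure (Y i × U i)) [∀ i, IsProbabilityMeasure (P i)]
    (i : ι) (f : Ω × (∀ i, Y i × U i) → ℝ) (hf : Continuous f) (C : ℝ) (hC : ∀ x, ‖f x‖ ≤ C) :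
    ∃ γ : Y i → U i, Measurable γ ∧
      ∫ x, f x ∂(μ.prod (Measure.pi
        (Function.update P i ((P i).fst.map (fun y => (y, γ y)))))) ≤
      ∫ x, f x ∂(μ.prod (Measure.pi P)) := by
  let g : Y i × U i → ℝ :=
    fun w => ∫ x, f (x.1, Function.update x.2 i w) ∂(μ.prod (Measure.pi P))
  have hcu : Continuous (fun p : (Ω × (∀ i, Y i × U i)) × (Y i × U i) =>
      f (p.1.1, Function.update p.1.2 i p.2)) :=
    hf.comp ((continuous_fst.comp continuous_fst).prodMk
      ((continuous_snd.comp continuous_fst).update i continuous_snd))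
  have hg : Continuous g := by
    apply continuous_of_dominated (bound := fun _ => C)
    · intro w
      exact (hcu.comp (by fun_prop : Continuous fun x : (Ω × (∀ i, Y i × U i)) =>
        (x, w))).measurable.aestronglyMeasurable
    · intro w
      exact ae_of_all _ fun _ => hC _
    · exact integrable_const _
    · refine ae_of_all _ fun x => ?_
      exact hcu.comp (by fun_prop : Continuous fun w : Y i × U i => (x, w))
  have hgC : ∀ w, ‖g w‖ ≤ C := fun w => by
    simpa using norm_integral_le_of_norm_le_const (μ := μ.prod (Measure.pi P))
      (ae_of_all _ fun x : (Ω × (∀ i, Y i × U i)) => hC (x.1, Function.update x.2 i w))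
  obtain ⟨γ, hγ, hmin⟩ := team_selection g hg
  have hγ2 : Measurable (fun y => (y, γ y)) := measurable_id.prodMk hγ
  refine ⟨γ, hγ, ?_⟩
  have : IsProbabilityMeasure ((P i).fst.map (fun y => (y, γ y))) :=
    Measure.isProbabilityMeasure_map hγ2.aemeasurable
  rw [team_fubini μ P i _ f hf.measurable C hC]
  have e := team_fubini μ P i (P i) f hf.measurable C hC
  rw [Function.update_eq_self] at e
  rw [e]
  change ∫ w, g w ∂_ ≤ ∫ w, g w ∂_
  rw [integral_map hγ2.aemeasurable hg.measurable.aestronglyMeasurable, Measure.fst,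
    integral_map (f := fun y => g (y, γ y)) measurable_fst.aemeasurable
      (hg.measurable.comp hγ2).aestronglyMeasurable]
  apply integral_mono
  · exact Integrable.of_bound (hg.measurable.comp (hγ2.comp measurable_fst)).aestronglyMeasurable
      C (ae_of_all _ fun _ => hgC _)
  · exact Integrable.of_bound hg.measurable.aestronglyMeasurable C (ae_of_all _ fun _ => hgC _)
  · intro w
    exact hmin w.1 w.2

/-- Theorem 4.5 of the paper.  Consider a static team with
`N` decision makers and independent measurements: `Ω₀` Polish with prior `μ₀`,
measurement spaces `Y i` Polish with laws `Q i`, compact metrizable action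
spaces `U i`, the joint law of `(ω₀, y)` being the product measure
`μ₀ ⊗ ⨂ᵢ Q i`, and a continuous bounded cost
`c : Ω₀ × ∏ᵢ Y i × ∏ᵢ U i → [0,∞)`.  Then an optimal team policy exists:
there are Borel measurable `γ i : Y i → U i` minimizing the expected cost
`J γ = ∫ c (ω₀, y, (γ i (y i))ᵢ) d(μ₀ ⊗ ⨂ᵢ Q i)` over all measurable policies. -/
theorem static_team_exists_optimal_compact_continuous
    {N : ℕ} {Ω₀ : Type*} {Y U : Fin N → Type*}
    [TopologicalSpace Ω₀] [PolishSpace Ω₀] [MeasurableSpace Ω₀] [BorelSpace Ω₀]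
    [∀ i, TopologicalSpace (Y i)] [∀ i, PolishSpace (Y i)]
    [∀ i, MeasurableSpace (Y i)] [∀ i, BorelSpace (Y i)]
    [∀ i, TopologicalSpace (U i)] [∀ i, CompactSpace (U i)]
    [∀ i, TopologicalSpace.MetrizableSpace (U i)] [∀ i, Nonempty (U i)]
    [∀ i, MeasurableSpace (U i)] [∀ i, BorelSpace (U i)]
    (μ₀ : Measure Ω₀) [IsProbabilityMeasure μ₀]
    (Q : ∀ i, Measure (Y i)) [∀ i, IsProbabilityMeasure (Q i)]
    (c : Ω₀ × (∀ i, Y i) × (∀ i, U i) → ℝ)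
    (hc_cont : Continuous c)
    (hc_nonneg : ∀ p, 0 ≤ c p)
    (hc_bdd : ∃ C : ℝ, ∀ p, c p ≤ C) :
    ∃ γ : ∀ i, Y i → U i, (∀ i, Measurable (γ i)) ∧
      ∀ γ' : ∀ i, Y i → U i, (∀ i, Measurable (γ' i)) →
        (∫ p, c (p.1, p.2, fun i => γ i (p.2 i)) ∂(μ₀.prod (Measure.pi Q))) ≤
          ∫ p, c (p.1, p.2, fun i => γ' i (p.2 i)) ∂(μ₀.prod (Measure.pi Q)) := by
  classical
  obtain ⟨C, hC⟩ := hc_bdd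
  have : ∀ i, SecondCountableTopology (U i) := fun i => by
    let _ := TopologicalSpace.metrizableSpaceMetric (U i)
    infer_instance
  let f : Ω₀ × (∀ i, Y i × U i) → ℝ := fun x => c (x.1, fun i => (x.2 i).1, fun i => (x.2 i).2)
  have hf : Continuous f := by
    apply hc_cont.comp
    fun_prop
  have hfC : ∀ x, ‖f x‖ ≤ C := fun x => by
    rw [Real.norm_of_nonneg (hc_nonneg _)]; exact hC _
  -- deterministic policies as relaxed ones
  have hdet : ∀ γ : ∀ i, Y i → U i, (∀ i, Measurable (γ i)) →
      ∫ p, c (p.1, p.2, fun i => γ i (p.2 i)) ∂(μ₀.prod (Measure.pi Q)) =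
      ∫ x, f x ∂(μ₀.prod (Measure.pi fun i => (Q i).map (fun y => (y, γ i y)))) := by
    intro γ hγ
    have hγ2 : ∀ i, Measurable (fun y => (y, γ i y)) := fun i => measurable_id.prodMk (hγ i)
    have : ∀ i, IsProbabilityMeasure ((Q i).map (fun y => (y, γ i y))) := fun i =>
      Measure.isProbabilityMeasure_map (hγ2 i).aemeasurable
    have hm : Measurable (fun (y : ∀ i, Y i) i => (y i, γ i (y i))) := by
      rw [measurable_pi_iff]
      exact fun i => (hγ2 i).comp (measurable_pi_apply i)
    have e1 : μ₀.prod (Measure.pi fun i => (Q i).map (fun y => (y, γ i y)))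
        = (μ₀.prod (Measure.pi Q)).map
          (Prod.map id (fun (y : ∀ i, Y i) i => (y i, γ i (y i)))) := by
      rw [← Measure.map_prod_map _ _ measurable_id hm, Measure.map_id,
        Measure.pi_map_pi (fun i => (hγ2 i).aemeasurable)]
    rw [e1, integral_map (measurable_id.prodMap hm).aemeasurable
      hf.measurable.aestronglyMeasurable]
    rfl
  let Qp : ∀ i, ProbabilityMeasure (Y i) := fun i => ⟨Q i, inferInstance⟩
  let S : Set (∀ i, ProbabilityMeasure (Y i × U i)) :=
    Set.univ.pi fun i => {P | P.map measurable_fst.aemeasurable = Qp i}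
  have hScomp : IsCompact S := isCompact_univ_pi fun i => team_compact (Qp i)
  have hSmem : ∀ (γ : ∀ i, Y i → U i) (hγ : ∀ i, Measurable (γ i)),
      (fun i => (Qp i).map (measurable_id.prodMk (hγ i)).aemeasurable) ∈ S := by
    intro γ hγ i _
    apply Subtype.ext
    change ((Q i).map _).map _ = Q i
    rw [Measure.map_map measurable_fst (measurable_id.prodMk (hγ i))]
    exact Measure.map_id
  let F : BoundedContinuousFunction (Ω₀ × (∀ i, Y i × U i)) ℝ :=
    BoundedContinuousFunction.ofNormedAddCommGroup f hf C hfC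
  let J : (∀ i, ProbabilityMeasure (Y i × U i)) → ℝ := fun P =>
    ∫ x, f x ∂(μ₀.prod (Measure.pi fun i => (P i : Measure (Y i × U i))))
  have hJ : Continuous J := by
    let μp : ProbabilityMeasure Ω₀ := ⟨μ₀, inferInstance⟩
    have h1 : Continuous (fun P : (∀ i, ProbabilityMeasure (Y i × U i)) =>
        μp.prod (ProbabilityMeasure.pi P)) :=
      ProbabilityMeasure.continuous_prod.comp
        (continuous_const.prodMk ProbabilityMeasure.continuous_pi)
    exact (ProbabilityMeasure.continuous_integral_boundedContinuousFunction F).comp h1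
  have hSne : S.Nonempty :=
    ⟨_, hSmem (fun i _ => Classical.arbitrary (U i)) (fun i => measurable_const)⟩
  obtain ⟨P₀, hP₀, hmin⟩ := hScomp.exists_isMinOn hSne hJ.continuousOn
  -- purification, one coordinate at a time
  have key : ∀ s : Finset (Fin N), ∃ P ∈ S, J P ≤ J P₀ ∧ ∀ i ∈ s, ∃ γ : Y i → U i,
      Measurable γ ∧ (P i : Measure (Y i × U i)) = (Q i).map (fun y => (y, γ y)) := by
    intro s
    induction s using Finset.induction_on with
    | empty => exact ⟨P₀, hP₀, le_rfl, by simp⟩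
    | insert i s his ih =>
      obtain ⟨P, hPS, hPJ, hPd⟩ := ih
      obtain ⟨γ, hγ, hle⟩ := team_purify μ₀ (fun i => (P i : Measure (Y i × U i))) i f hf C hfC
      have hfst : (P i : Measure (Y i × U i)).fst = Q i :=
        congrArg ProbabilityMeasure.toMeasure (hPS i (Set.mem_univ i))
      rw [hfst] at hle
      let R : ProbabilityMeasure (Y i × U i) :=
        (Qp i).map (measurable_id.prodMk hγ).aemeasurable
      refine ⟨Function.update P i R, ?_, ?_, ?_⟩
      · intro j _
        by_cases h : j = i
        · subst h
          simp only [Function.update_self]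
          apply Subtype.ext
          change ((Q j).map _).map _ = Q j
          rw [Measure.map_map measurable_fst (measurable_id.prodMk hγ)]
          exact Measure.map_id
        · simp only [Function.update_of_ne h]
          exact hPS j (Set.mem_univ j)
      · refine le_trans (le_of_eq ?_) (hle.trans hPJ)
        have : (fun j => ((Function.update P i R j : ProbabilityMeasure (Y j × U j)) :
            Measure (Y j × U j))) = Function.update (fun j => (P j : Measure (Y j × U j))) i
              ((Q i).map (fun y => (y, γ y))) := by
          funext j
          by_cases h : j = i
          · subst h
            simp only [Function.update_self]
            rfl
          · simp only [Function.update_of_ne h]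
        simp only [J]
        rw [this]
      · intro j hj
        by_cases h : j = i
        · subst h
          refine ⟨γ, hγ, ?_⟩
          simp only [Function.update_self]
          rfl
        · simp only [Function.update_of_ne h]
          exact hPd j (Finset.mem_of_mem_insert_of_ne hj h)
  obtain ⟨P, -, hPJ, hPd⟩ := key Finset.univ
  choose γ hγ hPγ using fun i => hPd i (Finset.mem_univ i)
  refine ⟨γ, hγ, fun γ' hγ' => ?_⟩
  rw [hdet γ hγ, hdet γ' hγ']
  have h1 : J P ≤ J (fun i => (Qp i).map (measurable_id.prodMk (hγ' i)).aemeasurable) :=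
    hPJ.trans (hmin (hSmem γ' hγ'))
  simp only [J, hPγ] at h1
  exact h1
end

section
/- Consider a static team with N decision makers and independent measurements in which each action space Uⁱ is compact metrizable and the cost c : Ω₀ × ∏ᵢYⁱ × ∏ᵢUⁱ → [0,∞) is continuous and bounded. Then the optimal team cost V(μ₀, Q¹, …, Qᴺ) = inf_γ J(γ) is a continuous function of the prior (μ₀, Q¹, …, Qᴺ), where each space of probability measures is equipped with the topology of weak convergence and the product carries the product topology. -/
open MeasureTheory Filter Topology

lemma aux_int {X : Type*} [MeasurableSpace X] {μ : Measure X} [IsFiniteMeasure μ] {f : X → ℝ}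
    {M : ℝ} (hf : Measurable f) (h0 : ∀ x, 0 ≤ f x) (h1 : ∀ x, f x ≤ M) : Integrable f μ :=
  Integrable.of_bound hf.aestronglyMeasurable M
    (Eventually.of_forall fun x => by rw [Real.norm_of_nonneg (h0 x)]; exact h1 x)

lemma aux_tendsto {X ι : Type*} [TopologicalSpace X] [MeasurableSpace X] [OpensMeasurableSpace X]
    {l : Filter ι} {μ : ι → ProbabilityMeasure X} {μ₀ : ProbabilityMeasure X}
    (h : Tendsto μ l (𝓝 μ₀)) {f : X → ℝ} {M : ℝ} (hf : Continuous f)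
    (h0 : ∀ x, 0 ≤ f x) (h1 : ∀ x, f x ≤ M) :
    Tendsto (fun n => ∫ x, f x ∂(μ n : Measure X)) l (𝓝 (∫ x, f x ∂(μ₀ : Measure X))) := by
  have := ProbabilityMeasure.tendsto_iff_forall_integral_tendsto.1 h
    (BoundedContinuousFunction.ofNormedAddCommGroup f hf M
      (fun x => by rw [Real.norm_of_nonneg (h0 x)]; exact h1 x))
  simpa using this

lemma aux_partition {A B : Type*} [TopologicalSpace A] [SecondCountableTopology A]
    [MeasurableSpace A] [BorelSpace A]
    [TopologicalSpace B] [SecondCountableTopology B] [MeasurableSpace B] [BorelSpace B]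
    (D : A → B → B → ℝ) (hD : Continuous fun p : A × B × B => D p.1 p.2.1 p.2.2)
    {M : ℝ} (hD0 : ∀ a b b', 0 ≤ D a b b') (hDM : ∀ a b b', D a b b' ≤ M)
    (hDd : ∀ a b, D a b b = 0)
    (α₀ : ProbabilityMeasure A) (β₀ : ProbabilityMeasure B) {ε : ℝ} (hε : 0 < ε) :
    ∃ (n : ℕ) (b : ℕ → B) (φ : ℕ → B → ℝ) (r : B → ℝ),
      (∀ j, Continuous (φ j)) ∧ Continuous r ∧ (∀ j x, 0 ≤ φ j x) ∧ (∀ x, 0 ≤ r x) ∧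
      (∀ x, ∑ j ∈ Finset.range n, φ j x + r x = 1) ∧
      ∫ p, (∑ j ∈ Finset.range n, φ j p.2 * D p.1 p.2 (b j) + M * r p.2)
        ∂((α₀ : Measure A).prod (β₀ : Measure B)) < ε := by
  obtain ⟨a₀⟩ : Nonempty A := nonempty_of_isProbabilityMeasure (α₀ : Measure A)
  have : Nonempty B := nonempty_of_isProbabilityMeasure (β₀ : Measure B)
  set δ := ε / 3 with hδ
  have hδ0 : 0 < δ := by positivity
  have hM : 0 ≤ M := by
    obtain ⟨b⟩ := ‹Nonempty B›
    exact (hD0 a₀ b b).trans (hDM a₀ b b)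
  set b := TopologicalSpace.denseSeq B
  let ρ : B → B → ℝ := fun x y => ∫ a, D a x y ∂(α₀ : Measure A)
  have hρ : Continuous fun p : B × B => ρ p.1 p.2 := by
    apply continuous_of_dominated (bound := fun _ => M)
    · intro p
      exact (Continuous.measurable (by fun_prop)).aestronglyMeasurable
    · intro p
      exact Eventually.of_forall fun a => by rw [Real.norm_of_nonneg (hD0 ..)]; exact hDM ..
    · exact integrable_const _
    · exact Eventually.of_forall fun a => by fun_prop
  have hρ0 : ∀ x y, 0 ≤ ρ x y := fun x y => integral_nonneg fun a => hD0 ..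
  have hρd : ∀ x, ρ x x = 0 := fun x => by simp [ρ, hDd]
  let f : ℕ → B → ℝ := fun j x => max 0 (δ - ρ x (b j))
  have hf : ∀ j, Continuous (f j) := fun j => by
    have : Continuous fun x => ρ x (b j) := hρ.comp (by fun_prop : Continuous fun x => (x, b j))
    fun_prop
  have hf0 : ∀ j x, 0 ≤ f j x := fun j x => le_max_left _ _
  have hfρ : ∀ j x, f j x * ρ x (b j) ≤ f j x * δ := fun j x => by
    rcases le_or_gt (ρ x (b j)) δ with h | h
    · exact mul_le_mul_of_nonneg_left h (hf0 j x)
    · have : f j x = 0 := max_eq_left (by linarith)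
      simp [this]
  let S : ℕ → B → ℝ := fun n x => ∑ j ∈ Finset.range n, f j x
  have hS : ∀ n, Continuous (S n) := fun n => continuous_finsetSum _ fun j _ => hf j
  have hS0 : ∀ n x, 0 ≤ S n x := fun n x => Finset.sum_nonneg fun j _ => hf0 j x
  have hden : ∀ (n : ℕ) x, 0 < 1 + n * S n x := fun n x => by
    have := hS0 n x
    positivity
  let r : ℕ → B → ℝ := fun n x => 1 / (1 + n * S n x)
  have hr : ∀ n, Continuous (r n) := fun n =>
    continuous_const.div (by have := hS n; fun_prop) fun x => (hden n x).ne'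
  have hr0 : ∀ n x, 0 ≤ r n x := fun n x => (div_pos one_pos (hden n x)).le
  have hr1 : ∀ n x, r n x ≤ 1 := fun n x => by
    rw [div_le_one (hden n x)]
    have := hS0 n x
    have : 0 ≤ (n : ℝ) * S n x := by positivity
    linarith
  have hrt : ∀ x, Tendsto (fun n => r n x) atTop (𝓝 0) := by
    intro x
    obtain ⟨k, hk⟩ : ∃ k, ρ x (b k) < δ := by
      have ho : IsOpen {y | ρ x y < δ} :=
        isOpen_lt (hρ.comp (by fun_prop : Continuous fun y => (x, y))) continuous_const
      obtain ⟨y, hy, k, rfl⟩ := (TopologicalSpace.denseRange_denseSeq B).exists_mem_open ho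
        ⟨x, by simp [hρd, hδ0]⟩ |>.elim fun k hk => (⟨b k, hk, k, rfl⟩ : ∃ y, y ∈ {y | ρ x y < δ} ∧ ∃ k, b k = y)
      exact ⟨k, hy⟩
    have hfk : 0 < f k x := lt_max_of_lt_right (by linarith)
    have : Tendsto (fun n : ℕ => 1 + (n : ℝ) * S n x) atTop atTop := by
      have h1 : Tendsto (fun n : ℕ => (n : ℝ) * f k x) atTop atTop :=
        tendsto_natCast_atTop_atTop.atTop_mul_const hfk
      refine tendsto_atTop_mono' _ ?_ h1
      filter_upwards [eventually_gt_atTop k] with n hn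
      have : f k x ≤ S n x :=
        Finset.single_le_sum (f := fun j => f j x) (fun j _ => hf0 j x) (Finset.mem_range.2 hn)
      have := mul_le_mul_of_nonneg_left this (Nat.cast_nonneg (α := ℝ) n)
      linarith
    simpa [r, Pi.inv_def] using this.inv_tendsto_atTop
  have hrint : Tendsto (fun n => M * ∫ x, r n x ∂(β₀ : Measure B)) atTop (𝓝 (M * ∫ x, 0 ∂(β₀ : Measure B))) := by
    refine Tendsto.const_mul _ ?_
    refine tendsto_integral_of_dominated_convergence (fun _ => 1) ?_ (integrable_const _) ?_ ?_
    · exact fun n => (hr n).measurable.aestronglyMeasurable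
    · exact fun n => Eventually.of_forall fun x => by
        rw [Real.norm_of_nonneg (hr0 ..)]; exact hr1 ..
    · exact Eventually.of_forall hrt
  simp only [integral_zero, mul_zero] at hrint
  obtain ⟨n, hn⟩ := (hrint.eventually (gt_mem_nhds hδ0)).exists
  let φ : ℕ → B → ℝ := fun j x => n * f j x * r n x
  have hφ : ∀ j, Continuous (φ j) := fun j => by
    have := hf j
    have := hr n
    fun_prop
  have hφ0 : ∀ j x, 0 ≤ φ j x := fun j x => by
    have := hf0 j x
    have := hr0 n x
    positivity
  have hsum : ∀ x, ∑ j ∈ Finset.range n, φ j x + r n x = 1 := by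
    intro x
    have : ∑ j ∈ Finset.range n, φ j x = n * S n x * r n x := by
      simp only [φ, S, Finset.mul_sum, Finset.sum_mul]
    rw [this]
    have := (hden n x).ne'
    simp only [r]
    field_simp
    ring
  have hbd : ∀ p : A × B, ∑ j ∈ Finset.range n, φ j p.2 * D p.1 p.2 (b j) + M * r n p.2 ≤ M := by
    intro p
    have : ∑ j ∈ Finset.range n, φ j p.2 * D p.1 p.2 (b j) ≤ ∑ j ∈ Finset.range n, φ j p.2 * M :=
      Finset.sum_le_sum fun j _ => mul_le_mul_of_nonneg_left (hDM ..) (hφ0 ..)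
    rw [← Finset.sum_mul] at this
    have h2 := hsum p.2
    calc _ ≤ (∑ j ∈ Finset.range n, φ j p.2) * M + M * r n p.2 := by linarith
      _ = M * (∑ j ∈ Finset.range n, φ j p.2 + r n p.2) := by ring
      _ = M := by rw [h2, mul_one]
  have hge : ∀ p : A × B, 0 ≤ ∑ j ∈ Finset.range n, φ j p.2 * D p.1 p.2 (b j) + M * r n p.2 :=
    fun p => add_nonneg (Finset.sum_nonneg fun j _ => mul_nonneg (hφ0 ..) (hD0 ..))
      (mul_nonneg hM (hr0 ..))
  have hcont : Continuous fun p : A × B =>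
      ∑ j ∈ Finset.range n, φ j p.2 * D p.1 p.2 (b j) + M * r n p.2 := by
    have := hr n
    refine Continuous.add (continuous_finsetSum _ fun j _ => ?_) (by fun_prop)
    have := hφ j
    have : Continuous fun p : A × B => D p.1 p.2 (b j) :=
      hD.comp (by fun_prop : Continuous fun p : A × B => (p.1, p.2, b j))
    fun_prop
  refine ⟨n, b, φ, r n, hφ, hr n, hφ0, hr0 n, hsum, ?_⟩
  rw [integral_prod_symm _ (aux_int hcont.measurable hge hbd)]
  have hinner : ∀ x, ∫ a, (∑ j ∈ Finset.range n, φ j x * D a x (b j) + M * r n x) ∂(α₀ : Measure A)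
      = ∑ j ∈ Finset.range n, φ j x * ρ x (b j) + M * r n x := by
    intro x
    have hi : ∀ j, Integrable (fun a => φ j x * D a x (b j)) (α₀ : Measure A) := fun j =>
      (aux_int (Continuous.measurable (by fun_prop)) (fun a => hD0 ..) (fun a => hDM ..)).const_mul _
    rw [integral_add (integrable_finsetSum _ fun j _ => hi j) (integrable_const _),
      integral_finsetSum _ fun j _ => hi j]
    simp [ρ, integral_const_mul]
  simp only [hinner]
  have hle : ∀ x, ∑ j ∈ Finset.range n, φ j x * ρ x (b j) + M * r n x ≤ δ + M * r n x := by
    intro x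
    gcongr
    calc _ ≤ ∑ j ∈ Finset.range n, φ j x * δ := Finset.sum_le_sum fun j _ => by
            have h1 := hfρ j x
            have h2 : 0 ≤ n * r n x := by have := hr0 n x; positivity
            have := mul_le_mul_of_nonneg_left h1 h2
            simp only [φ]
            linarith
      _ = (∑ j ∈ Finset.range n, φ j x) * δ := by rw [Finset.sum_mul]
      _ ≤ 1 * δ := by
            have := hsum x
            have := hr0 n x
            gcongr
            linarith
      _ = δ := one_mul _
  have hri : Integrable (fun x => M * r n x) (β₀ : Measure B) :=
    (aux_int (hr n).measurable (hr0 n) (hr1 n)).const_mul _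
  calc _ ≤ ∫ x, (δ + M * r n x) ∂(β₀ : Measure B) := by
        refine integral_mono_of_nonneg (Eventually.of_forall fun x => ?_)
          ((integrable_const _).add hri) (Eventually.of_forall hle)
        exact add_nonneg (Finset.sum_nonneg fun j _ => mul_nonneg (hφ0 ..) (hρ0 ..))
          (mul_nonneg hM (hr0 ..))
    _ = δ + M * ∫ x, r n x ∂(β₀ : Measure B) := by
        rw [integral_add (integrable_const _) hri, integral_const_mul]
        simp
    _ < ε := by rw [hδ] at hn ⊢; linarith

lemma aux_uniform {A B ι : Type*} [TopologicalSpace A] [SecondCountableTopology A]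
    [TopologicalSpace.PseudoMetrizableSpace A] [MeasurableSpace A] [BorelSpace A]
    [TopologicalSpace B] [SecondCountableTopology B]
    [TopologicalSpace.PseudoMetrizableSpace B] [MeasurableSpace B] [BorelSpace B]
    (D : A → B → B → ℝ) (hD : Continuous fun p : A × B × B => D p.1 p.2.1 p.2.2)
    {M : ℝ} (hD0 : ∀ a b b', 0 ≤ D a b b') (hDM : ∀ a b b', D a b b' ≤ M)
    (hDd : ∀ a b, D a b b = 0) {l : Filter ι}
    {α : ι → ProbabilityMeasure A} {α₀ : ProbabilityMeasure A} (hα : Tendsto α l (𝓝 α₀))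
    {β : ι → ProbabilityMeasure B} {β₀ : ProbabilityMeasure B} (hβ : Tendsto β l (𝓝 β₀))
    {ε : ℝ} (hε : 0 < ε) :
    ∀ᶠ i in l, ∀ m : B → ℝ, Measurable m → (∀ x, 0 ≤ m x) → (∀ x, m x ≤ M) →
      (∀ x y, |m x - m y| ≤ ∫ a, D a x y ∂(α i : Measure A)) →
      |∫ x, m x ∂(β i : Measure B) - ∫ x, m x ∂(β₀ : Measure B)| ≤ ε := by
  obtain ⟨a₀⟩ : Nonempty A := nonempty_of_isProbabilityMeasure (α₀ : Measure A)
  obtain ⟨b₀⟩ : Nonempty B := nonempty_of_isProbabilityMeasure (β₀ : Measure B)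
  have hM : 0 ≤ M := (hD0 a₀ b₀ b₀).trans (hDM a₀ b₀ b₀)
  obtain ⟨n, b, φ, r, hφ, hr, hφ0, hr0, hsum, hlt⟩ :=
    aux_partition D hD hD0 hDM hDd α₀ β₀ (ε := ε / 3) (by positivity)
  have hr1 : ∀ x, r x ≤ 1 := fun x => by
    have := hsum x
    have : 0 ≤ ∑ j ∈ Finset.range n, φ j x := Finset.sum_nonneg fun j _ => hφ0 ..
    linarith
  have hs1 : ∀ x, ∑ j ∈ Finset.range n, φ j x ≤ 1 := fun x => by
    have := hsum x
    have := hr0 x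
    linarith
  have hφ1 : ∀ j ∈ Finset.range n, ∀ x, φ j x ≤ 1 := fun j hj x =>
    (Finset.single_le_sum (f := fun j => φ j x) (fun j _ => hφ0 j x) hj).trans (hs1 x)
  have hbd : ∀ p : A × B, ∑ j ∈ Finset.range n, φ j p.2 * D p.1 p.2 (b j) + M * r p.2 ≤ M := by
    intro p
    have : ∑ j ∈ Finset.range n, φ j p.2 * D p.1 p.2 (b j) ≤ ∑ j ∈ Finset.range n, φ j p.2 * M :=
      Finset.sum_le_sum fun j _ => mul_le_mul_of_nonneg_left (hDM ..) (hφ0 ..)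
    rw [← Finset.sum_mul] at this
    have h2 := hsum p.2
    calc _ ≤ (∑ j ∈ Finset.range n, φ j p.2) * M + M * r p.2 := by linarith
      _ = M * (∑ j ∈ Finset.range n, φ j p.2 + r p.2) := by ring
      _ = M := by rw [h2, mul_one]
  have hge : ∀ p : A × B, 0 ≤ ∑ j ∈ Finset.range n, φ j p.2 * D p.1 p.2 (b j) + M * r p.2 :=
    fun p => add_nonneg (Finset.sum_nonneg fun j _ => mul_nonneg (hφ0 ..) (hD0 ..))
      (mul_nonneg hM (hr0 ..))
  have hcont : Continuous fun p : A × B =>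
      ∑ j ∈ Finset.range n, φ j p.2 * D p.1 p.2 (b j) + M * r p.2 := by
    refine Continuous.add (continuous_finsetSum _ fun j _ => ?_) (by fun_prop)
    have := hφ j
    have : Continuous fun p : A × B => D p.1 p.2 (b j) :=
      hD.comp (by fun_prop : Continuous fun p : A × B => (p.1, p.2, b j))
    fun_prop
  -- key estimate
  have key : ∀ (μ : ProbabilityMeasure A) (ν : ProbabilityMeasure B) (m : B → ℝ),
      Measurable m → (∀ x, 0 ≤ m x) → (∀ x, m x ≤ M) →
      (∀ x y, |m x - m y| ≤ ∫ a, D a x y ∂(μ : Measure A)) →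
      |∫ x, m x ∂(ν : Measure B) - ∑ j ∈ Finset.range n, m (b j) * ∫ x, φ j x ∂(ν : Measure B)|
        ≤ ∫ p, (∑ j ∈ Finset.range n, φ j p.2 * D p.1 p.2 (b j) + M * r p.2)
        ∂((μ : Measure A).prod (ν : Measure B)) := by
    intro μ ν m hm hm0 hm1 hmD
    have hint := aux_int (μ := (μ : Measure A).prod (ν : Measure B)) hcont.measurable hge hbd
    rw [integral_prod_symm _ hint]
    have hinner : ∀ x, ∫ a, (∑ j ∈ Finset.range n, φ j x * D a x (b j) + M * r x) ∂(μ : Measure A)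
        = ∑ j ∈ Finset.range n, φ j x * (∫ a, D a x (b j) ∂(μ : Measure A)) + M * r x := by
      intro x
      have hi : ∀ j, Integrable (fun a => φ j x * D a x (b j)) (μ : Measure A) := fun j =>
        (aux_int (Continuous.measurable (by fun_prop)) (fun a => hD0 ..)
          (fun a => hDM ..)).const_mul _
      rw [integral_add (integrable_finsetSum _ fun j _ => hi j) (integrable_const _),
        integral_finsetSum _ fun j _ => hi j]
      simp [integral_const_mul]
    have hφi : ∀ j ∈ Finset.range n, Integrable (fun x => m (b j) * φ j x) (ν : Measure B) :=
      fun j hj => (aux_int (hφ j).measurable (hφ0 j) (hφ1 j hj)).const_mul _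
    have e1 : ∫ x, m x ∂(ν : Measure B) - ∑ j ∈ Finset.range n, m (b j) * ∫ x, φ j x ∂(ν : Measure B)
        = ∫ x, (m x - ∑ j ∈ Finset.range n, m (b j) * φ j x) ∂(ν : Measure B) := by
      rw [integral_sub (aux_int hm hm0 hm1) (integrable_finsetSum _ hφi),
        integral_finsetSum _ hφi]
      simp [integral_const_mul]
    rw [e1]
    refine (abs_integral_le_integral_abs).trans ?_
    refine integral_mono_of_nonneg (Eventually.of_forall fun x => abs_nonneg _)
      hint.integral_prod_right (Eventually.of_forall fun x => ?_)
    simp only [hinner]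
    have e2 : m x - ∑ j ∈ Finset.range n, m (b j) * φ j x =
        ∑ j ∈ Finset.range n, φ j x * (m x - m (b j)) + m x * r x := by
      have h := hsum x
      have : m x = m x * (∑ j ∈ Finset.range n, φ j x + r x) := by rw [h, mul_one]
      simp only [mul_sub, Finset.sum_sub_distrib, ← Finset.sum_mul]
      have h3 : ∑ j ∈ Finset.range n, m (b j) * φ j x = ∑ j ∈ Finset.range n, φ j x * m (b j) :=
        Finset.sum_congr rfl fun j _ => mul_comm _ _
      linarith
    rw [e2]
    refine (abs_add_le _ _).trans (add_le_add ((Finset.abs_sum_le_sum_abs _ _).trans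
      (Finset.sum_le_sum fun j _ => ?_)) ?_)
    · rw [abs_mul, abs_of_nonneg (hφ0 j x)]
      exact mul_le_mul_of_nonneg_left (hmD _ _) (hφ0 ..)
    · rw [abs_of_nonneg (mul_nonneg (hm0 x) (hr0 x))]
      exact mul_le_mul_of_nonneg_right (hm1 x) (hr0 x)
  have T1 : Tendsto (fun i => (α i).prod (β i)) l (𝓝 (α₀.prod β₀)) :=
    (ProbabilityMeasure.continuous_prod.tendsto (α₀, β₀)).comp (hα.prodMk_nhds hβ)
  have T2 : Tendsto (fun i => (α i).prod β₀) l (𝓝 (α₀.prod β₀)) :=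
    (ProbabilityMeasure.continuous_prod.tendsto (α₀, β₀)).comp (hα.prodMk_nhds tendsto_const_nhds)
  have E1 := (aux_tendsto T1 hcont hge hbd).eventually (gt_mem_nhds hlt)
  have E2 := (aux_tendsto T2 hcont hge hbd).eventually (gt_mem_nhds hlt)
  have T3 : Tendsto (fun i => ∑ j ∈ Finset.range n, M * |∫ x, φ j x ∂(β i : Measure B)
      - ∫ x, φ j x ∂(β₀ : Measure B)|) l (𝓝 (∑ j ∈ Finset.range n, M * |∫ x, φ j x ∂(β₀ : Measure B)
      - ∫ x, φ j x ∂(β₀ : Measure B)|)) :=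
    tendsto_finsetSum _ fun j hj =>
      ((aux_tendsto hβ (hφ j) (hφ0 j) (hφ1 j hj)).sub_const _).abs.const_mul _
  simp only [sub_self, abs_zero, mul_zero, Finset.sum_const_zero] at T3
  have E3 := T3.eventually (gt_mem_nhds (by positivity : 0 < ε / 3))
  filter_upwards [E1, E2, E3] with i h1 h2 h3 m hm hm0 hm1 hmD
  have k1 := (key (α i) (β i) m hm hm0 hm1 hmD).trans h1.le
  have k2 := (key (α i) β₀ m hm hm0 hm1 hmD).trans h2.le
  have k3 : |∑ j ∈ Finset.range n, m (b j) * ∫ x, φ j x ∂(β i : Measure B)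
      - ∑ j ∈ Finset.range n, m (b j) * ∫ x, φ j x ∂(β₀ : Measure B)| ≤ ε / 3 := by
    refine le_trans ?_ h3.le
    rw [← Finset.sum_sub_distrib]
    refine (Finset.abs_sum_le_sum_abs _ _).trans (Finset.sum_le_sum fun j _ => ?_)
    rw [← mul_sub, abs_mul, abs_of_nonneg (hm0 _)]
    exact mul_le_mul_of_nonneg_right (hm1 _) (abs_nonneg _)
  rw [abs_le] at k1 k2 k3 ⊢
  constructor <;> linarith [k1.1, k1.2, k2.1, k2.2, k3.1, k3.2]

lemma aux_select {A B V W : Type*} [TopologicalSpace A] [SecondCountableTopology A]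
    [MeasurableSpace A] [BorelSpace A]
    [TopologicalSpace B] [SecondCountableTopology B] [MeasurableSpace B] [BorelSpace B]
    [TopologicalSpace V] [SecondCountableTopology V] [MeasurableSpace V] [BorelSpace V]
    [TopologicalSpace W] [SecondCountableTopology W] [MeasurableSpace W] [BorelSpace W] [Nonempty W]
    (C : A × B × V × W → ℝ) (hC : Continuous C) {M : ℝ} (hC0 : ∀ p, 0 ≤ C p) (hCM : ∀ p, C p ≤ M)
    (D : A → B → B → ℝ) (hD : Continuous fun p : A × B × B => D p.1 p.2.1 p.2.2)
    (hD0 : ∀ a b b', 0 ≤ D a b b') (hDM : ∀ a b b', D a b b' ≤ M)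
    (hDC : ∀ a b b' v w, |C (a, b, v, w) - C (a, b', v, w)| ≤ D a b b')
    (g : A → V) (hg : Measurable g) (α : ProbabilityMeasure A) :
    ∃ m : B → ℝ, Measurable m ∧ (∀ x, 0 ≤ m x) ∧ (∀ x, m x ≤ M) ∧
      (∀ x y, |m x - m y| ≤ ∫ a, D a x y ∂(α : Measure A)) ∧
      (∀ (β : ProbabilityMeasure B) (γ : B → W), Measurable γ → ∫ x, m x ∂(β : Measure B) ≤
        ∫ p, C (p.1, p.2, g p.1, γ p.2) ∂((α : Measure A).prod (β : Measure B))) ∧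
      (∀ ε > 0, ∃ γ : B → W, Measurable γ ∧ ∀ β : ProbabilityMeasure B,
        ∫ p, C (p.1, p.2, g p.1, γ p.2) ∂((α : Measure A).prod (β : Measure B)) ≤
        ∫ x, m x ∂(β : Measure B) + ε) := by
  let h : B → W → ℝ := fun x w => ∫ a, C (a, x, g a, w) ∂(α : Measure A)
  have hmeas : ∀ x w, Measurable fun a => C (a, x, g a, w) := fun x w =>
    hC.measurable.comp (by fun_prop)
  have hint : ∀ x w, Integrable (fun a => C (a, x, g a, w)) (α : Measure A) := fun x w =>
    aux_int (hmeas x w) (fun _ => hC0 _) (fun _ => hCM _)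
  have hh : Continuous fun p : B × W => h p.1 p.2 := by
    apply continuous_of_dominated (bound := fun _ => M)
    · intro p
      exact (hmeas _ _).aestronglyMeasurable
    · intro p
      exact Eventually.of_forall fun a => by rw [Real.norm_of_nonneg (hC0 _)]; exact hCM _
    · exact integrable_const _
    · exact Eventually.of_forall fun a => by fun_prop
  have hh0 : ∀ x w, 0 ≤ h x w := fun x w => integral_nonneg fun a => hC0 _
  have hhM : ∀ x w, h x w ≤ M := fun x w => by
    calc h x w ≤ ∫ a, M ∂(α : Measure A) :=
          integral_mono (hint x w) (integrable_const _) fun a => hCM _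
      _ = M := by simp
  have hbb : ∀ x, BddBelow (Set.range (h x)) := fun x => ⟨0, by rintro _ ⟨w, rfl⟩; exact hh0 x w⟩
  let m : B → ℝ := fun x => ⨅ w, h x w
  have hDi : ∀ x y, Integrable (fun a => D a x y) (α : Measure A) := fun x y =>
    aux_int (Continuous.measurable (by fun_prop)) (fun a => hD0 ..) (fun a => hDM ..)
  have hhD : ∀ x y w, h x w ≤ h y w + ∫ a, D a x y ∂(α : Measure A) := fun x y w => by
    simp only [h]
    rw [← integral_add (hint y w) (hDi x y)]
    refine integral_mono (hint x w) ((hint y w).add (hDi x y)) fun a => ?_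
    have := (abs_le.1 (hDC a x y (g a) w)).2
    simp only
    linarith
  have hhD' : ∀ x y w, h y w ≤ h x w + ∫ a, D a x y ∂(α : Measure A) := fun x y w => by
    simp only [h]
    rw [← integral_add (hint x w) (hDi x y)]
    refine integral_mono (hint y w) ((hint x w).add (hDi x y)) fun a => ?_
    have := (abs_le.1 (hDC a x y (g a) w)).1
    simp only
    linarith
  have hle : ∀ x w, m x ≤ h x w := fun x w => ciInf_le (hbb x) w
  have hm : Measurable m := by
    have : UpperSemicontinuous m := by
      apply upperSemicontinuous_ciInf hbb
      intro w
      exact (hh.comp (by fun_prop : Continuous fun x => (x, w))).upperSemicontinuous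
    exact this.measurable
  have hm0 : ∀ x, 0 ≤ m x := fun x => le_ciInf (hh0 x)
  have hm1 : ∀ x, m x ≤ M := fun x => (hle x (Classical.arbitrary W)).trans (hhM _ _)
  have hCm : ∀ γ : B → W, Measurable γ → Measurable fun p : A × B => C (p.1, p.2, g p.1, γ p.2) :=
    fun γ hγ => hC.measurable.comp (by fun_prop)
  have hCint : ∀ (β : ProbabilityMeasure B) (γ : B → W), Measurable γ →
      Integrable (fun p : A × B => C (p.1, p.2, g p.1, γ p.2)) ((α : Measure A).prod (β : Measure B)) :=
    fun β γ hγ => aux_int (hCm γ hγ) (fun _ => hC0 _) (fun _ => hCM _)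
  have heq : ∀ (β : ProbabilityMeasure B) (γ : B → W), Measurable γ →
      ∫ p, C (p.1, p.2, g p.1, γ p.2) ∂((α : Measure A).prod (β : Measure B)) =
      ∫ x, h x (γ x) ∂(β : Measure B) := fun β γ hγ => by
    rw [integral_prod_symm _ (hCint β γ hγ)]
  have hγint : ∀ (β : ProbabilityMeasure B) (γ : B → W), Measurable γ →
      Integrable (fun x => h x (γ x)) (β : Measure B) := fun β γ hγ =>
    aux_int (hh.measurable.comp (by fun_prop : Measurable fun x => (x, γ x)))
      (fun _ => hh0 ..) (fun _ => hhM ..)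
  refine ⟨m, hm, hm0, hm1, ?_, ?_, ?_⟩
  · intro x y
    rw [abs_le]
    constructor
    · have : m y - ∫ a, D a x y ∂(α : Measure A) ≤ m x := le_ciInf fun w => by
        linarith [hhD' x y w, hle y w]
      linarith
    · have : m x - ∫ a, D a x y ∂(α : Measure A) ≤ m y := le_ciInf fun w => by
        linarith [hhD x y w, hle x w]
      linarith
  · intro β γ hγ
    rw [heq β γ hγ]
    exact integral_mono (aux_int hm hm0 hm1) (hγint β γ hγ) fun x => hle _ _
  · intro ε hε
    classical
    let w := TopologicalSpace.denseSeq W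
    have hex : ∀ x, ∃ k, h x (w k) < m x + ε := by
      intro x
      obtain ⟨w₀, hw₀⟩ := exists_lt_of_ciInf_lt (show ⨅ w, h x w < m x + ε by simp only [m]; linarith)
      have ho : IsOpen {v | h x v < m x + ε} :=
        isOpen_lt (hh.comp (by fun_prop : Continuous fun v => (x, v))) continuous_const
      exact (TopologicalSpace.denseRange_denseSeq W).exists_mem_open ho ⟨w₀, hw₀⟩
    have hF : Measurable fun x => Nat.find (hex x) := measurable_find _ fun k =>
      measurableSet_lt (hh.comp (by fun_prop : Continuous fun x => (x, w k))).measurable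
        (hm.add_const _)
    have hγ : Measurable fun x => w (Nat.find (hex x)) := measurable_from_nat.comp hF
    refine ⟨fun x => w (Nat.find (hex x)), hγ, fun β => ?_⟩
    rw [heq β _ hγ]
    calc _ ≤ ∫ x, (m x + ε) ∂(β : Measure B) :=
          integral_mono (hγint β _ hγ) ((aux_int hm hm0 hm1).add (integrable_const _))
            fun x => (Nat.find_spec (hex x)).le
      _ = _ := by
        rw [integral_add (aux_int hm hm0 hm1) (integrable_const _)]
        simp

/-- Value of the two-component problem. -/
noncomputable def auxVal {A B V W : Type*} [MeasurableSpace A] [MeasurableSpace B]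
    [MeasurableSpace W] (C : A × B × V × W → ℝ) (Γ : Set (A → V))
    (α : Measure A) (β : Measure B) : ℝ :=
  sInf {r : ℝ | ∃ g ∈ Γ, ∃ γ : B → W, Measurable γ ∧
    r = ∫ p, C (p.1, p.2, g p.1, γ p.2) ∂(α.prod β)}

lemma aux_core {A B V W ι : Type*} [TopologicalSpace A] [SecondCountableTopology A]
    [TopologicalSpace.PseudoMetrizableSpace A] [MeasurableSpace A] [BorelSpace A]
    [TopologicalSpace B] [SecondCountableTopology B]
    [TopologicalSpace.PseudoMetrizableSpace B] [MeasurableSpace B] [BorelSpace B]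
    [TopologicalSpace V] [SecondCountableTopology V] [MeasurableSpace V] [BorelSpace V]
    [CompactSpace V] [Nonempty V]
    [TopologicalSpace W] [SecondCountableTopology W] [MeasurableSpace W] [BorelSpace W]
    [CompactSpace W] [Nonempty W]
    (C : A × B × V × W → ℝ) (hC : Continuous C) {M : ℝ} (hC0 : ∀ p, 0 ≤ C p) (hCM : ∀ p, C p ≤ M)
    (Γ : Set (A → V)) (hΓ : ∀ g ∈ Γ, Measurable g) (hΓ' : Γ.Nonempty) {l : Filter ι}
    {α : ι → ProbabilityMeasure A} {α₀ : ProbabilityMeasure A} (hα : Tendsto α l (𝓝 α₀))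
    {β : ι → ProbabilityMeasure B} {β₀ : ProbabilityMeasure B} (hβ : Tendsto β l (𝓝 β₀)) :
    Tendsto (fun i => auxVal C Γ (α i) (β i) - auxVal C Γ (α i) β₀) l (𝓝 0) := by
  let F : A × B × B → V × W → ℝ := fun p q =>
    |C (p.1, p.2.1, q.1, q.2) - C (p.1, p.2.2, q.1, q.2)|
  have hFc : Continuous (Function.uncurry F) := by
    simp only [F, Function.uncurry_def]
    fun_prop
  have hF0 : ∀ p q, 0 ≤ F p q := fun p q => abs_nonneg _
  have hFM : ∀ p q, F p q ≤ M := fun p q => by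
    simp only [F]
    rw [abs_le]
    constructor <;> linarith [hC0 (p.1, p.2.1, q.1, q.2), hC0 (p.1, p.2.2, q.1, q.2),
      hCM (p.1, p.2.1, q.1, q.2), hCM (p.1, p.2.2, q.1, q.2)]
  let D : A → B → B → ℝ := fun a b b' => sSup (F (a, b, b') '' Set.univ)
  have hD : Continuous fun p : A × B × B => D p.1 p.2.1 p.2.2 :=
    isCompact_univ.continuous_sSup hFc
  have hD0 : ∀ a b b', 0 ≤ D a b b' := fun a b b' =>
    Real.sSup_nonneg (by rintro _ ⟨q, -, rfl⟩; exact hF0 _ _)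
  have hDM : ∀ a b b', D a b b' ≤ M := fun a b b' =>
    csSup_le (Set.univ_nonempty.image _) (by rintro _ ⟨q, -, rfl⟩; exact hFM _ _)
  have hDd : ∀ a b, D a b b = 0 := fun a b => by
    refine le_antisymm ?_ (hD0 ..)
    exact csSup_le (Set.univ_nonempty.image _) (by rintro _ ⟨q, -, rfl⟩; simp [F])
  have hDC : ∀ a b b' v w, |C (a, b, v, w) - C (a, b', v, w)| ≤ D a b b' := fun a b b' v w =>
    le_csSup ⟨M, by rintro _ ⟨q, -, rfl⟩; exact hFM _ _⟩ ⟨(v, w), trivial, rfl⟩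
  have comp : ∀ (μ : ProbabilityMeasure A) (ν ν' : ProbabilityMeasure B) (ε : ℝ), 0 < ε →
      (∀ m : B → ℝ, Measurable m → (∀ x, 0 ≤ m x) → (∀ x, m x ≤ M) →
      (∀ x y, |m x - m y| ≤ ∫ a, D a x y ∂(μ : Measure A)) →
      ∫ x, m x ∂(ν' : Measure B) ≤ ∫ x, m x ∂(ν : Measure B) + ε) →
      auxVal C Γ μ ν' ≤ auxVal C Γ μ ν + 2 * ε := by
    intro μ ν ν' ε hε H
    rw [← sub_le_iff_le_add]
    refine le_csInf ?_ ?_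
    · obtain ⟨g, hg⟩ := hΓ'
      exact ⟨_, g, hg, fun _ => Classical.arbitrary W, measurable_const, rfl⟩
    · rintro _ ⟨g, hg, γ, hγ, rfl⟩
      obtain ⟨m, hm, hm0, hm1, hmD, hlow, hup⟩ :=
        aux_select C hC hC0 hCM D hD hD0 hDM hDC g (hΓ g hg) μ
      obtain ⟨γ', hγ', hup⟩ := hup ε hε
      have h1 := hlow ν γ hγ
      have h2 := hup ν'
      have h3 := H m hm hm0 hm1 hmD
      have h4 : auxVal C Γ μ ν' ≤
          ∫ p, C (p.1, p.2, g p.1, γ' p.2) ∂((μ : Measure A).prod (ν' : Measure B)) :=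
        csInf_le ⟨0, by rintro _ ⟨g, hg, γ, hγ, rfl⟩; exact integral_nonneg fun _ => hC0 _⟩
          ⟨g, hg, γ', hγ', rfl⟩
      linarith
  rw [Metric.tendsto_nhds]
  intro ε hε
  filter_upwards [aux_uniform D hD hD0 hDM hDd hα hβ (ε := ε / 3) (by positivity)] with i hi
  have c1 := comp (α i) β₀ (β i) (ε / 3) (by positivity) fun m a b c d => by
    linarith [(abs_le.1 (hi m a b c d)).2]
  have c2 := comp (α i) (β i) β₀ (ε / 3) (by positivity) fun m a b c d => by
    linarith [(abs_le.1 (hi m a b c d)).1]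
  rw [Real.dist_eq, sub_zero, abs_lt]
  constructor <;> linarith

section Final

variable {N : ℕ} {Ω₀ : Type*} {Y U : Fin N → Type*}
    [TopologicalSpace Ω₀] [PolishSpace Ω₀] [MeasurableSpace Ω₀] [BorelSpace Ω₀]
    [∀ i, TopologicalSpace (Y i)] [∀ i, PolishSpace (Y i)]
    [∀ i, MeasurableSpace (Y i)] [∀ i, BorelSpace (Y i)]
    [∀ i, TopologicalSpace (U i)] [∀ i, CompactSpace (U i)]
    [∀ i, TopologicalSpace.MetrizableSpace (U i)] [∀ i, Nonempty (U i)]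
    [∀ i, MeasurableSpace (U i)] [∀ i, BorelSpace (U i)]

/-- The team value. -/
noncomputable def auxTeam (c : Ω₀ × (∀ i, Y i) × (∀ i, U i) → ℝ)
    (q : ProbabilityMeasure Ω₀ × (∀ i, ProbabilityMeasure (Y i))) : ℝ :=
  sInf {r : ℝ | ∃ γ : ∀ i, Y i → U i, (∀ i, Measurable (γ i)) ∧
          r = ∫ p, c (p.1, p.2, fun i => γ i (p.2 i))
                ∂((q.1 : Measure Ω₀).prod
                    (Measure.pi fun i => (q.2 i : Measure (Y i))))}

omit [∀ i, TopologicalSpace (Y i)] [∀ i, PolishSpace (Y i)] [∀ i, BorelSpace (Y i)]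
  [TopologicalSpace Ω₀] [PolishSpace Ω₀] [BorelSpace Ω₀] in
lemma aux_map_update (μ : ProbabilityMeasure Ω₀) (Q : ∀ i, ProbabilityMeasure (Y i)) (i : Fin N)
    (ν : ProbabilityMeasure (Y i)) :
    (((μ : Measure Ω₀).prod (Measure.pi fun j => (Q j : Measure (Y j)))).prod
      (ν : Measure (Y i))).map
      (fun p => ((p.1.1, Function.update p.1.2 i p.2) : Ω₀ × (∀ j, Y j))) =
    (μ : Measure Ω₀).prod
      (Measure.pi fun j => (Function.update Q i ν j : Measure (Y j))) := by
  have hu : Measurable fun p : (∀ j, Y j) × Y i => Function.update p.1 i p.2 := by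
    rw [measurable_pi_iff]
    intro j
    by_cases h : j = i
    · subst h; simpa using measurable_snd
    · simp only [Function.update_of_ne h]; fun_prop
  have h1 : ((Measure.pi fun j => (Q j : Measure (Y j))).prod (ν : Measure (Y i))).map
      (fun p => Function.update p.1 i p.2) =
      Measure.pi fun j => (Function.update Q i ν j : Measure (Y j)) := by
    symm
    apply Measure.pi_eq
    intro s hs
    rw [Measure.map_apply hu (MeasurableSet.univ_pi hs)]
    have : (fun p : (∀ j, Y j) × Y i => Function.update p.1 i p.2) ⁻¹' (Set.univ.pi s) =
        (Set.univ.pi (Function.update s i Set.univ)) ×ˢ (s i) := by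
      ext p
      simp only [Set.mem_preimage, Set.mem_univ_pi, Set.mem_prod]
      constructor
      · intro h
        refine ⟨fun j => ?_, by simpa using h i⟩
        by_cases hj : j = i
        · subst hj; simp
        · simpa [Function.update_of_ne hj] using h j
      · rintro ⟨h, h'⟩ j
        by_cases hj : j = i
        · subst hj; simpa using h'
        · simpa [Function.update_of_ne hj] using h j
    rw [this, Measure.prod_prod, Measure.pi_pi, ← Finset.mul_prod_erase _ _ (Finset.mem_univ i),
      ← Finset.mul_prod_erase (a := i) Finset.univ (fun j => (Function.update Q i ν j : Measure (Y j)) (s j)) (Finset.mem_univ i)]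
    simp only [Function.update_self, measure_univ, one_mul]
    rw [mul_comm]
    congr 1
    refine Finset.prod_congr rfl fun j hj => ?_
    rw [Function.update_of_ne (Finset.ne_of_mem_erase hj), Function.update_of_ne (Finset.ne_of_mem_erase hj)]
  rw [← h1]
  conv_rhs => rw [← Measure.map_id (μ := (μ : Measure Ω₀))]
  rw [Measure.map_prod_map _ _ measurable_id hu, ← Measure.prodAssoc_prod,
    Measure.map_map (by fun_prop) (by fun_prop)]
  rfl

omit [∀ i, CompactSpace (U i)] [∀ i, Nonempty (U i)]
  [∀ i, TopologicalSpace.MetrizableSpace (U i)] in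
lemma aux_team_update [∀ i, SecondCountableTopology (U i)]
    (c : Ω₀ × (∀ i, Y i) × (∀ i, U i) → ℝ) (hc : Continuous c)
    (q : ProbabilityMeasure Ω₀ × (∀ i, ProbabilityMeasure (Y i))) (i : Fin N)
    (ν : ProbabilityMeasure (Y i)) :
    auxTeam c (q.1, Function.update q.2 i ν) =
    auxVal (A := Ω₀ × (∀ j, Y j)) (B := Y i) (V := ∀ j, U j) (W := U i)
      (fun p => c (p.1.1, Function.update p.1.2 i p.2.1, Function.update p.2.2.1 i p.2.2.2))
      {g | ∃ γ : ∀ j, Y j → U j, (∀ j, Measurable (γ j)) ∧ g = fun a j => γ j (a.2 j)}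
      ((q.1 : Measure Ω₀).prod (Measure.pi fun j => (q.2 j : Measure (Y j)))) ν := by
  have key : ∀ (γ : ∀ j, Y j → U j) (γi : Y i → U i), (∀ j, Measurable (γ j)) → Measurable γi →
      ∫ p, c (p.1, p.2, fun j => (Function.update γ i γi) j (p.2 j))
        ∂((q.1 : Measure Ω₀).prod
          (Measure.pi fun j => (Function.update q.2 i ν j : Measure (Y j)))) =
      ∫ p, c (p.1.1, Function.update p.1.2 i p.2, Function.update (fun j => γ j (p.1.2 j)) i (γi p.2))
        ∂(((q.1 : Measure Ω₀).prod (Measure.pi fun j => (q.2 j : Measure (Y j)))).prod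
          (ν : Measure (Y i))) := by
    intro γ γi hγ hγi
    have hm : ∀ j, Measurable (Function.update γ i γi j) := fun j => by
      by_cases h : j = i
      · subst h; simpa using hγi
      · simpa [Function.update_of_ne h] using hγ j
    rw [← aux_map_update, integral_map]
    · refine integral_congr_ae (Eventually.of_forall fun p => ?_)
      simp only
      congr 3
      funext j
      by_cases h : j = i
      · subst h; simp
      · simp [Function.update_of_ne h]
    · refine Measurable.aemeasurable (Measurable.prodMk (by fun_prop) ?_)
      rw [measurable_pi_iff]
      intro j
      by_cases h : j = i
      · subst h; simpa using measurable_snd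
      · simp only [Function.update_of_ne h]; fun_prop
    · refine (hc.measurable.comp ?_).aestronglyMeasurable
      fun_prop
  unfold auxTeam auxVal
  congr 1
  ext r
  constructor
  · rintro ⟨γ, hγ, rfl⟩
    refine ⟨_, ⟨γ, hγ, rfl⟩, γ i, hγ i, ?_⟩
    have := key γ (γ i) hγ (hγ i)
    rw [Function.update_eq_self] at this
    exact this
  · rintro ⟨_, ⟨γ, hγ, rfl⟩, γi, hγi, rfl⟩
    refine ⟨Function.update γ i γi, fun j => ?_, (key γ γi hγ hγi).symm⟩
    by_cases h : j = i
    · subst h; simpa using hγi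
    · simpa [Function.update_of_ne h] using hγ j

omit [∀ i, CompactSpace (U i)] [∀ i, Nonempty (U i)] [∀ i, TopologicalSpace (Y i)]
  [∀ i, PolishSpace (Y i)] [∀ i, BorelSpace (Y i)] [TopologicalSpace Ω₀] [PolishSpace Ω₀]
  [BorelSpace Ω₀] [∀ i, TopologicalSpace (U i)] [∀ i, BorelSpace (U i)]
  [∀ i, TopologicalSpace.MetrizableSpace (U i)] in
lemma aux_team_fst
    (c : Ω₀ × (∀ i, Y i) × (∀ i, U i) → ℝ)
    (q : ProbabilityMeasure Ω₀ × (∀ i, ProbabilityMeasure (Y i))) :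
    auxTeam c q =
    auxVal (A := ∀ j, Y j) (B := Ω₀) (V := ∀ j, U j) (W := Unit)
      (fun p => c (p.2.1, p.1, p.2.2.1))
      {g | ∃ γ : ∀ j, Y j → U j, (∀ j, Measurable (γ j)) ∧ g = fun a j => γ j (a j)}
      (Measure.pi fun j => (q.2 j : Measure (Y j))) (q.1 : Measure Ω₀) := by
  have key : ∀ (γ : ∀ j, Y j → U j), 
      ∫ p, c (p.1, p.2, fun j => γ j (p.2 j))
        ∂((q.1 : Measure Ω₀).prod (Measure.pi fun j => (q.2 j : Measure (Y j)))) =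
      ∫ p, c (p.2, p.1, fun j => γ j (p.1 j))
        ∂((Measure.pi fun j => (q.2 j : Measure (Y j))).prod (q.1 : Measure Ω₀)) := fun γ =>
    (integral_prod_swap (fun p : Ω₀ × (∀ j, Y j) => c (p.1, p.2, fun j => γ j (p.2 j)))).symm
  unfold auxTeam auxVal
  congr 1
  ext r
  constructor
  · rintro ⟨γ, hγ, rfl⟩
    exact ⟨_, ⟨γ, hγ, rfl⟩, fun _ => (), measurable_const, key γ⟩
  · rintro ⟨_, ⟨γ, hγ, rfl⟩, γi, hγi, rfl⟩
    exact ⟨γ, hγ, (key γ).symm⟩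

lemma aux_step (c : Ω₀ × (∀ i, Y i) × (∀ i, U i) → ℝ) (hc : Continuous c)
    (hc0 : ∀ p, 0 ≤ c p) {M : ℝ} (hcM : ∀ p, c p ≤ M)
    {ι : Type*} {l : Filter ι} {q : ι → ProbabilityMeasure Ω₀ × (∀ i, ProbabilityMeasure (Y i))}
    {q₀ : ProbabilityMeasure Ω₀ × (∀ i, ProbabilityMeasure (Y i))} (hq : Tendsto q l (𝓝 q₀))
    (i : Fin N) :
    Tendsto (fun n => auxTeam c (q n) - auxTeam c ((q n).1, Function.update (q n).2 i (q₀.2 i)))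
      l (𝓝 0) := by
  have : ∀ i, SecondCountableTopology (U i) := fun i => by
    letI := TopologicalSpace.metrizableSpaceMetric (U i)
    infer_instance
  have h1 : ∀ n, auxTeam c (q n) =
      auxTeam c ((q n).1, Function.update (q n).2 i ((q n).2 i)) := fun n => by
    rw [Function.update_eq_self]
  simp only [h1]
  simp only [aux_team_update c hc]
  have hα : Tendsto (fun n => (q n).1.prod (ProbabilityMeasure.pi (q n).2)) l
      (𝓝 (q₀.1.prod (ProbabilityMeasure.pi q₀.2))) := by
    have hp : Continuous fun q : ProbabilityMeasure Ω₀ × (∀ i, ProbabilityMeasure (Y i)) =>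
        q.1.prod (ProbabilityMeasure.pi q.2) :=
      ProbabilityMeasure.continuous_prod.comp
        (continuous_fst.prodMk (ProbabilityMeasure.continuous_pi.comp continuous_snd))
    exact (hp.tendsto q₀).comp hq
  have hβ : Tendsto (fun n => (q n).2 i) l (𝓝 (q₀.2 i)) :=
    ((by fun_prop : Continuous fun q : ProbabilityMeasure Ω₀ × (∀ i, ProbabilityMeasure (Y i)) =>
      q.2 i).tendsto q₀).comp hq
  refine aux_core (A := Ω₀ × (∀ j, Y j)) (B := Y i) (V := ∀ j, U j) (W := U i) (M := M)
    _ ?_ (fun _ => hc0 _) (fun _ => hcM _) _ ?_ ?_ hα hβ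
  · fun_prop
  · rintro _ ⟨γ, hγ, rfl⟩
    fun_prop
  · exact ⟨_, fun j _ => Classical.arbitrary _, fun j => measurable_const, rfl⟩

lemma aux_step_fst (c : Ω₀ × (∀ i, Y i) × (∀ i, U i) → ℝ) (hc : Continuous c)
    (hc0 : ∀ p, 0 ≤ c p) {M : ℝ} (hcM : ∀ p, c p ≤ M)
    {ι : Type*} {l : Filter ι} {q : ι → ProbabilityMeasure Ω₀ × (∀ i, ProbabilityMeasure (Y i))}
    {q₀ : ProbabilityMeasure Ω₀ × (∀ i, ProbabilityMeasure (Y i))} (hq : Tendsto q l (𝓝 q₀)) :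
    Tendsto (fun n => auxTeam c (q n) - auxTeam c (q₀.1, (q n).2)) l (𝓝 0) := by
  have : ∀ i, SecondCountableTopology (U i) := fun i => by
    letI := TopologicalSpace.metrizableSpaceMetric (U i)
    infer_instance
  simp only [aux_team_fst c]
  have hα : Tendsto (fun n => ProbabilityMeasure.pi (q n).2) l
      (𝓝 (ProbabilityMeasure.pi q₀.2)) :=
    ((ProbabilityMeasure.continuous_pi.comp continuous_snd).tendsto q₀).comp hq
  have hβ : Tendsto (fun n => (q n).1) l (𝓝 q₀.1) := (continuous_fst.tendsto q₀).comp hq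
  refine aux_core (A := ∀ j, Y j) (B := Ω₀) (V := ∀ j, U j) (W := Unit) (M := M)
    _ ?_ (fun _ => hc0 _) (fun _ => hcM _) _ ?_ ?_ hα hβ
  · fun_prop
  · rintro _ ⟨γ, hγ, rfl⟩
    fun_prop
  · exact ⟨_, fun j _ => Classical.arbitrary _, fun j => measurable_const, rfl⟩

lemma aux_final (c : Ω₀ × (∀ i, Y i) × (∀ i, U i) → ℝ) (hc : Continuous c)
    (hc0 : ∀ p, 0 ≤ c p) {M : ℝ} (hcM : ∀ p, c p ≤ M) : Continuous (auxTeam c) := by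
  rw [continuous_iff_continuousAt]
  intro q₀
  let R : Finset (Fin N) → ProbabilityMeasure Ω₀ × (∀ i, ProbabilityMeasure (Y i)) →
      ProbabilityMeasure Ω₀ × (∀ i, ProbabilityMeasure (Y i)) :=
    fun s q => (q.1, fun i => if i ∈ s then q₀.2 i else q.2 i)
  have hR : ∀ s, Tendsto (R s) (𝓝 q₀) (𝓝 q₀) := by
    intro s
    have h1 : Continuous (R s) := by
      refine continuous_fst.prodMk (continuous_pi fun i => ?_)
      by_cases h : i ∈ s
      · simp only [h, if_true]; fun_prop
      · simp only [h, if_false]; fun_prop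
    have h2 : R s q₀ = q₀ := by simp [R]
    simpa [h2] using h1.tendsto q₀
  have hs : ∀ s, Tendsto (fun q => auxTeam c q - auxTeam c (R s q)) (𝓝 q₀) (𝓝 0) := by
    intro s
    induction s using Finset.induction_on with
    | empty => simp [R]
    | insert i s hi ih =>
      have h := ih.add (aux_step c hc hc0 hcM (hR s) i)
      rw [add_zero] at h
      refine h.congr fun q => ?_
      have : ((R s q).1, Function.update (R s q).2 i (q₀.2 i)) = R (insert i s) q := by
        refine Prod.ext rfl ?_
        funext j
        by_cases hj : j = i
        · subst hj; simp [R]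
        · simp [R, Function.update_of_ne hj, hj]
      rw [this]
      ring
  have h := (hs Finset.univ).add (aux_step_fst c hc hc0 hcM (hR Finset.univ))
  have h' := h.add_const (auxTeam c q₀)
  rw [add_zero, zero_add] at h'
  refine Tendsto.congr (fun q => ?_) h'
  simp [R]

end Final

theorem static_team_value_continuous_in_prior
    {N : ℕ} {Ω₀ : Type*} {Y U : Fin N → Type*}
    [TopologicalSpace Ω₀] [PolishSpace Ω₀] [MeasurableSpace Ω₀] [BorelSpace Ω₀]
    [∀ i, TopologicalSpace (Y i)] [∀ i, PolishSpace (Y i)]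
    [∀ i, MeasurableSpace (Y i)] [∀ i, BorelSpace (Y i)]
    [∀ i, TopologicalSpace (U i)] [∀ i, CompactSpace (U i)]
    [∀ i, TopologicalSpace.MetrizableSpace (U i)] [∀ i, Nonempty (U i)]
    [∀ i, MeasurableSpace (U i)] [∀ i, BorelSpace (U i)]
    (c : Ω₀ × (∀ i, Y i) × (∀ i, U i) → ℝ)
    (hc_cont : Continuous c)
    (hc_nonneg : ∀ p, 0 ≤ c p)
    (hc_bdd : ∃ C : ℝ, ∀ p, c p ≤ C) :
    Continuous
      (fun q : ProbabilityMeasure Ω₀ × (∀ i, ProbabilityMeasure (Y i)) =>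
        sInf {r : ℝ | ∃ γ : ∀ i, Y i → U i, (∀ i, Measurable (γ i)) ∧
          r = ∫ p, c (p.1, p.2, fun i => γ i (p.2 i))
                ∂((q.1 : Measure Ω₀).prod
                    (Measure.pi fun i => (q.2 i : Measure (Y i))))}) := by
  obtain ⟨M, hM⟩ := hc_bdd
  exact aux_final c hc_cont hc_nonneg hM
end

section
/- Consider a static team with a classical (expanding) information structure: the measurement spaces Y¹,…,Yᴺ and action spaces U¹,…,Uᴺ are compact metrizable, the measurements (y¹,…,yᴺ) have a fixed joint probability distribution ν on ∏ₖYᵏ (not affected by any actions), and decision maker n applies uⁿ = γⁿ(y¹,…,yⁿ) for a Borel measurable γⁿ : Y¹×⋯×Yⁿ → Uⁿ. Suppose the cost c̃ : ∏ₖYᵏ × ∏ₖUᵏ → [0,∞) is bounded and Borel measurable and, for every fixed y = (y¹,…,yᴺ), the map u = (u¹,…,uᴺ) ↦ c̃(y,u) is jointly lower semi-continuous. Then there exists a deterministic optimal team policy, i.e., Borel maps γ¹,…,γᴺ attaining the infimum over all such policies of ∫ c̃(y, (γⁿ(y¹,…,yⁿ))ₙ) ν(dy). -/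
open MeasureTheory

namespace StaticTeam
open Set Function PiNat TopologicalSpace

/-- A sequence of sets is Borel-separated. -/
def Sep {α : Type*} [MeasurableSpace α] (A : ℕ → Set α) : Prop :=
  ∃ B : ℕ → Set α, (∀ n, A n ⊆ B n) ∧ (∀ n, MeasurableSet (B n)) ∧ ⋂ n, B n = ∅

theorem Sep.mono {α : Type*} [MeasurableSpace α] {A A' : ℕ → Set α} (h : Sep A)
    (hA : ∀ n, A' n ⊆ A n) : Sep A' := by
  obtain ⟨B, h1, h2, h3⟩ := h
  exact ⟨B, fun n => (hA n).trans (h1 n), h2, h3⟩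

theorem Sep.glue {α : Type*} [MeasurableSpace α] (n0 : ℕ) {A : ℕ → ℕ → Set α} {A' : ℕ → Set α}
    (h : ∀ i, Sep (A i)) (h0 : A' n0 ⊆ ⋃ i, A i n0) (h1 : ∀ n, n ≠ n0 → ∀ i, A' n ⊆ A i n) :
    Sep A' := by
  choose B hB hBm hBe using h
  refine ⟨fun n => if n = n0 then ⋃ i, B i n0 else ⋂ i, B i n, ?_, ?_, ?_⟩
  · intro n
    by_cases hn : n = n0
    · subst hn
      simp only [if_true]
      exact h0.trans (iUnion_mono fun i => hB i n)
    · simp only [hn, if_false]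
      exact subset_iInter fun i => (h1 n hn i).trans (hB i n)
  · intro n
    by_cases hn : n = n0
    · subst hn
      simp only [if_true]
      exact MeasurableSet.iUnion fun i => hBm i n
    · simp only [hn, if_false]
      exact MeasurableSet.iInter fun i => hBm i n
  · ext x
    simp only [mem_iInter, mem_empty_iff_false, iff_false]
    intro hx
    have hx0 := hx n0
    simp only [if_true, mem_iUnion] at hx0
    obtain ⟨i, hi⟩ := hx0
    have : x ∈ ⋂ n, B i n := by
      rw [mem_iInter]
      intro n
      by_cases hn : n = n0
      · rw [hn]; exact hi
      · have := hx n
        simp only [hn, if_false, mem_iInter] at this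
        exact this i
    rw [hBe] at this
    exact this

theorem sep_pair {α : Type*} [MeasurableSpace α] {A : ℕ → Set α} {i j : ℕ} {u v : Set α}
    (hu : MeasurableSet u) (hv : MeasurableSet v) (huv : Disjoint u v) (hi : A i ⊆ u)
    (hj : A j ⊆ v) : Sep A := by
  refine ⟨fun n => (⋂ _ : n = i, u) ∩ (⋂ _ : n = j, v), ?_, ?_, ?_⟩
  · rintro n x hx
    exact ⟨mem_iInter.2 fun h => hi (h ▸ hx), mem_iInter.2 fun h => hj (h ▸ hx)⟩
  · intro n
    exact (MeasurableSet.iInter fun _ => hu).inter (MeasurableSet.iInter fun _ => hv)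
  · ext x
    simp only [mem_iInter, mem_inter_iff, mem_empty_iff_false, iff_false]
    intro hx
    exact huv.le_bot ⟨(hx i).1 rfl, (hx j).2 rfl⟩

theorem novikov_range {α : Type*} [TopologicalSpace α] [T2Space α] [MeasurableSpace α]
    [OpensMeasurableSpace α] {f : ℕ → (ℕ → ℕ) → α} (hf : ∀ n, Continuous (f n))
    (h : ⋂ n, range (f n) = ∅) : Sep fun n => range (f n) := by
  let D : ℕ → (ℕ → ℕ) → (ℕ → ℕ) := fun n z k => z (Nat.pair n k)
  let F : ℕ → (ℕ → ℕ) → α := fun n z => f n (D n z)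
  have hF : ∀ n, Continuous (F n) := fun n => (hf n).comp (by fun_prop)
  have hDs : ∀ n, Surjective (D n) := fun n w => ⟨fun t => w t.unpair.2, by
    funext k; simp [D]⟩
  have hFr : ∀ n, range (F n) = range (f n) := fun n => (hDs n).range_comp (f n)
  simp only [← hFr] at h ⊢
  by_contra hfg
  have I : ∀ n x, ¬ Sep (fun k => F k '' cylinder x n) →
      ∃ x', x' ∈ cylinder x n ∧ ¬ Sep (fun k => F k '' cylinder x' (n + 1)) := by
    intro n x
    contrapose!
    intro H
    refine Sep.glue n.unpair.1 (A := fun i k => F k '' cylinder (update x n i) (n + 1))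
      (fun i => H _ (update_mem_cylinder _ _ _)) ?_ ?_
    · rw [← image_iUnion]
      exact image_mono (iUnion_cylinder_update x n).ge
    · rintro k hk i _ ⟨z, hz, rfl⟩
      refine ⟨update z n i, ?_, ?_⟩
      · rw [mem_cylinder_iff] at hz ⊢
        intro t ht
        by_cases htn : t = n
        · subst htn; simp
        · simp only [update_of_ne htn]
          exact hz t (by omega)
      · have : D k (update z n i) = D k z := by
          funext t
          simp only [D]
          rw [update_of_ne]
          rintro rfl
          simp at hk
        simp only [F, this]
  let A := { p : ℕ × (ℕ → ℕ) // ¬ Sep (fun k => F k '' cylinder p.2 p.1) }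
  have : ∀ p : A, ∃ q : A, q.1.1 = p.1.1 + 1 ∧ q.1.2 ∈ cylinder p.1.2 p.1.1 := by
    rintro ⟨⟨n, x⟩, hp⟩
    rcases I n x hp with ⟨x', hx', h'⟩
    exact ⟨⟨⟨n + 1, x'⟩, h'⟩, rfl, hx'⟩
  choose G hFn hFx using this
  let p0 : A := ⟨⟨0, fun _ => 0⟩, by simp [hfg]⟩
  let p : ℕ → A := fun n => G^[n] p0
  have prec : ∀ n, p (n + 1) = G (p n) := fun n => by simp only [p, iterate_succ', Function.comp]
  have pn_fst : ∀ n, (p n).1.1 = n := fun n ↦ by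
    induction n with
    | zero => rfl
    | succ n IH => simp only [prec, hFn, IH]
  have Ix : ∀ m n, m + 1 ≤ n → (p n).1.2 m = (p (m + 1)).1.2 m := by
    intro m
    apply Nat.le_induction
    · rfl
    intro n hmn IH
    have I : (G (p n)).val.snd m = (p n).val.snd m := by
      apply hFx (p n) m
      rw [pn_fst]
      exact hmn
    rw [prec, I, IH]
  set x : ℕ → ℕ := fun n => (p (n + 1)).1.2 n with hx
  have M : ∀ n, ¬ Sep (fun k => F k '' cylinder x n) := by
    intro n
    have h1 := (p n).2
    have h2 : cylinder x n = cylinder (p n).1.2 (p n).1.1 := by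
      rw [pn_fst, ← mem_cylinder_iff_eq, mem_cylinder_iff]
      intro i hi
      rw [hx]
      exact (Ix i n hi).symm
    rw [h2]
    exact h1
  have hne : ∃ j, F 0 x ≠ F j x := by
    by_contra! hcon
    have : F 0 x ∈ ⋂ n, range (F n) := by
      rw [mem_iInter]
      intro n
      rw [hcon n]
      exact mem_range_self _
    rw [h] at this
    exact this
  obtain ⟨j, hj⟩ := hne
  obtain ⟨u, v, u_open, v_open, xu, yv, huv⟩ := t2_separation hj
  let : MetricSpace (ℕ → ℕ) := metricSpaceNatNat
  obtain ⟨ε, εpos, hε⟩ : ∃ (ε : ℝ), ε > 0 ∧ Metric.ball x ε ⊆ F 0 ⁻¹' u ∩ F j ⁻¹' v := by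
    apply Metric.mem_nhds_iff.1
    exact Filter.inter_mem ((hF 0).continuousAt.preimage_mem_nhds (u_open.mem_nhds xu))
      ((hF j).continuousAt.preimage_mem_nhds (v_open.mem_nhds yv))
  obtain ⟨n, hn⟩ : ∃ n : ℕ, (1 / 2 : ℝ) ^ n < ε :=
    exists_pow_lt_of_lt_one εpos (by norm_num)
  have hcyl : cylinder x n ⊆ F 0 ⁻¹' u ∩ F j ⁻¹' v := by
    apply Subset.trans _ hε
    intro z hz
    rw [mem_cylinder_iff_dist_le] at hz
    exact hz.trans_lt hn
  exact M n (sep_pair u_open.measurableSet v_open.measurableSet huv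
    (image_subset_iff.2 (hcyl.trans inter_subset_left))
    (image_subset_iff.2 (hcyl.trans inter_subset_right)))

/-- Novikov's separation theorem. -/
theorem novikov {α : Type*} [TopologicalSpace α] [T2Space α] [MeasurableSpace α]
    [OpensMeasurableSpace α] {A : ℕ → Set α} (hA : ∀ n, AnalyticSet (A n))
    (h : ⋂ n, A n = ∅) : Sep A := by
  by_cases he : ∃ n, A n = ∅
  · obtain ⟨n, hn⟩ := he
    refine sep_pair (i := n) (j := n) MeasurableSet.empty MeasurableSet.empty (by simp) ?_ ?_ <;>
    simp [hn]
  · push Not at he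
    have : ∀ n, ∃ f : (ℕ → ℕ) → α, Continuous f ∧ range f = A n := by
      intro n
      have := hA n
      rw [AnalyticSet] at this
      rcases this with h | h
      · exact absurd h (he n).ne_empty
      · exact h
    choose f hf hr using this
    simp only [← hr] at h
    have := novikov_range hf h
    simpa only [hr] using this

theorem measurableSet_fst_image {Y U : Type*} [TopologicalSpace Y] [PolishSpace Y]
    [MeasurableSpace Y] [BorelSpace Y] [TopologicalSpace U] [PolishSpace U] [CompactSpace U]
    [MeasurableSpace U] [BorelSpace U] {M : Set (Y × U)} (hM : MeasurableSet M)
    (hcl : ∀ y, IsClosed {u | (y, u) ∈ M}) : MeasurableSet (Prod.fst '' M) := by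
  obtain ⟨b, hbc, -, hb⟩ := exists_countable_basis U
  obtain ⟨V, hV⟩ := (hbc.insert ∅).exists_eq_range (insert_nonempty _ _)
  have hVo : ∀ n, IsOpen (V n) := by
    intro n
    have : V n ∈ insert ∅ b := hV ▸ mem_range_self n
    rcases this with h | h
    · rw [h]; exact isOpen_empty
    · exact hb.isOpen h
  have hVb : ∀ (O : Set U) (u : U), IsOpen O → u ∈ O → ∃ n, u ∈ V n ∧ V n ⊆ O := by
    intro O u hO hu
    obtain ⟨v, hv, h1, h2⟩ := hb.exists_subset_of_mem_open hu hO
    have : v ∈ range V := hV ▸ mem_insert_of_mem _ hv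
    obtain ⟨n, rfl⟩ := this
    exact ⟨n, h1, h2⟩
  -- complement of the set of `y` with `V n ⊆ A_y`
  let C : ℕ → Set Y := fun n => Prod.fst '' (M ∩ Prod.snd ⁻¹' V n)
  have hC : ∀ n, AnalyticSet (C n) := fun n =>
    (hM.inter (measurable_snd (hVo n).measurableSet)).analyticSet.image_of_continuous continuous_fst
  have hC' : ∀ n y, y ∉ C n → ∀ u ∈ V n, (y, u) ∉ M := by
    intro n y hy u hu hm
    exact hy ⟨(y, u), ⟨hm, hu⟩, rfl⟩
  let Z : ℕ → Set (Y × U) := fun n => Mᶜ ∩ ((Prod.fst ⁻¹' C n) ∪ (Prod.snd ⁻¹' (V n)ᶜ))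
  have hZ : ∀ n, AnalyticSet (Z n) := by
    intro n
    have h1 : AnalyticSet (Prod.fst ⁻¹' C n : Set (Y × U)) := (hC n).preimage continuous_fst
    have h2 : AnalyticSet (Prod.snd ⁻¹' (V n)ᶜ : Set (Y × U)) :=
      (measurable_snd (hVo n).measurableSet.compl).analyticSet
    have h3 : AnalyticSet ((Prod.fst ⁻¹' C n) ∪ (Prod.snd ⁻¹' (V n)ᶜ) : Set (Y × U)) := by
      rw [union_eq_iUnion]
      exact AnalyticSet.iUnion fun b => by cases b <;> assumption
    simp only [Z]
    rw [inter_eq_iInter]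
    exact AnalyticSet.iInter fun b => by cases b; exacts [h3, hM.compl.analyticSet]
  have hZe : ⋂ n, Z n = ∅ := by
    ext ⟨y, u⟩
    simp only [mem_iInter, mem_empty_iff_false, iff_false]
    intro hx
    have hyu : (y, u) ∉ M := (hx 0).1
    obtain ⟨n, hn, hns⟩ := hVb _ u (hcl y).isOpen_compl hyu
    rcases (hx n).2 with h | h
    · obtain ⟨⟨y', u'⟩, ⟨h1, h2⟩, h3⟩ := h
      simp only at h3
      subst h3
      exact hns h2 h1
    · exact h hn
  obtain ⟨W, hZW, hWm, hWe⟩ := novikov hZ hZe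
  have hB : ∀ n, MeasurablySeparable (Prod.fst '' (Mᶜ \ W n)) (C n) := by
    intro n
    refine AnalyticSet.measurablySeparable
      ((hM.compl.diff (hWm n)).analyticSet.image_of_continuous continuous_fst) (hC n) ?_
    rw [Set.disjoint_left]
    rintro _ ⟨⟨y, u⟩, ⟨h1, h2⟩, rfl⟩ hy
    exact h2 (hZW n ⟨h1, Or.inl hy⟩)
  choose B hB1 hB2 hBm using hB
  have key : (Prod.fst '' M)ᶜ = ⋃ (F : Finset ℕ) (_ : (univ : Set U) ⊆ ⋃ n ∈ F, V n),
      ⋂ n ∈ F, B n := by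
    ext y
    simp only [mem_iUnion, mem_iInter, exists_prop]
    constructor
    · intro hy
      have hyM : ∀ u, (y, u) ∉ M := fun u hu => hy ⟨(y, u), hu, rfl⟩
      have hcov : (univ : Set U) ⊆ ⋃ n : {n // y ∈ B n}, V n := by
        intro u _
        have : ∃ n, (y, u) ∉ W n := by
          by_contra! hcon
          have : (y, u) ∈ ⋂ n, W n := mem_iInter.2 hcon
          rw [hWe] at this
          exact this
        obtain ⟨n, hn⟩ := this
        refine mem_iUnion.2 ⟨⟨n, hB1 n ⟨(y, u), ⟨hyM u, hn⟩, rfl⟩⟩, ?_⟩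
        by_contra hu
        exact hn (hZW n ⟨hyM u, Or.inr hu⟩)
      obtain ⟨t, ht⟩ := isCompact_univ.elim_finite_subcover _ (fun n => hVo _) hcov
      refine ⟨t.image Subtype.val, ?_, ?_⟩
      · intro u hu
        have := ht hu
        simp only [mem_iUnion] at this
        obtain ⟨i, hi, hui⟩ := this
        simp only [mem_iUnion]
        exact ⟨i, Finset.mem_image_of_mem _ hi, hui⟩
      · intro n hn
        obtain ⟨i, _, rfl⟩ := Finset.mem_image.1 hn
        exact i.2
    · rintro ⟨F, hF, hy⟩ ⟨⟨y', u⟩, hm, rfl⟩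
      have := hF (mem_univ u)
      simp only [mem_iUnion] at this
      obtain ⟨n, hn, hu⟩ := this
      have hyC : y' ∉ C n := fun h => (hB2 n).le_bot ⟨h, hy n hn⟩
      exact hC' n y' hyC u hu hm
  rw [← MeasurableSet.compl_iff, key]
  exact MeasurableSet.iUnion fun F => MeasurableSet.iUnion fun _ =>
    Finset.measurableSet_biInter _ fun n _ => hBm n

theorem argmin_set {Y U : Type*} [TopologicalSpace Y] [PolishSpace Y]
    [MeasurableSpace Y] [BorelSpace Y] [TopologicalSpace U] [PolishSpace U] [CompactSpace U]
    [MeasurableSpace U] [BorelSpace U] {M : Set (Y × U)} (hM : MeasurableSet M)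
    (hcl : ∀ y, IsClosed {u | (y, u) ∈ M}) (hne : ∀ y, ∃ u, (y, u) ∈ M)
    {h : Y × U → ℝ} (hh : Measurable h) (hlsc : ∀ y, LowerSemicontinuous fun u => h (y, u)) :
    ∃ M' ⊆ M, MeasurableSet M' ∧ (∀ y, IsClosed {u | (y, u) ∈ M'}) ∧ (∀ y, ∃ u, (y, u) ∈ M') ∧
      ∀ y u v, (y, u) ∈ M' → (y, v) ∈ M → h (y, u) ≤ h (y, v) := by
  refine ⟨{p | p ∈ M ∧ ∀ v, (p.1, v) ∈ M → h p ≤ h (p.1, v)}, fun p hp => hp.1, ?_, ?_, ?_,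
    fun y u v hu hv => hu.2 v hv⟩
  · have hP : ∀ q : ℚ, MeasurableSet (Prod.fst '' (M ∩ {p | h p ≤ q})) := by
      intro q
      apply measurableSet_fst_image (hM.inter (measurableSet_le hh measurable_const))
      intro y
      exact (hcl y).inter ((hlsc y).isClosed_preimage q)
    have : {p : Y × U | p ∈ M ∧ ∀ v, (p.1, v) ∈ M → h p ≤ h (p.1, v)} =
        M ∩ ⋂ q : ℚ, ((Prod.fst ⁻¹' (Prod.fst '' (M ∩ {p | h p ≤ q})))ᶜ ∪ {p | h p ≤ q}) := by
      ext ⟨y, u⟩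
      simp only [mem_ofPred_eq, mem_inter_iff, mem_iInter, mem_union, mem_compl_iff, mem_preimage]
      refine and_congr_right fun hm => ?_
      constructor
      · intro H q
        by_cases hq : y ∈ Prod.fst '' (M ∩ {p | h p ≤ q})
        · right
          obtain ⟨⟨y', v⟩, ⟨h1, h2⟩, rfl⟩ := hq
          exact (H v h1).trans h2
        · exact Or.inl hq
      · intro H v hv
        by_contra! hlt
        obtain ⟨q, hq1, hq2⟩ := exists_rat_btwn hlt
        rcases H q with h1 | h1
        · exact h1 ⟨(y, v), ⟨hv, hq1.le⟩, rfl⟩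
        · exact absurd h1 (not_le.2 hq2)
    rw [this]
    exact hM.inter (MeasurableSet.iInter fun q =>
      ((measurable_fst (hP q)).compl).union (measurableSet_le hh measurable_const))
  · intro y
    have : {u | (y, u) ∈ {p : Y × U | p ∈ M ∧ ∀ v, (p.1, v) ∈ M → h p ≤ h (p.1, v)}} =
      {u | (y, u) ∈ M} ∩ ⋂ v, ⋂ (_ : (y, v) ∈ M), (fun u => h (y, u)) ⁻¹' Iic (h (y, v)) := by
      ext u
      simp
    rw [this]
    exact (hcl y).inter (isClosed_iInter fun v => isClosed_iInter fun _ =>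
      (hlsc y).isClosed_preimage _)
  · intro y
    obtain ⟨u, hu, hmin⟩ := ((hlsc y).lowerSemicontinuousOn {u | (y, u) ∈ M}).exists_isMinOn
      (hne y) (hcl y).isCompact
    exact ⟨u, hu, fun v hv => hmin hv⟩

theorem exists_injective_lsc (U : Type*) [TopologicalSpace U] [MetrizableSpace U] [CompactSpace U]
    [Nonempty U] : ∃ e : U → ℝ, Injective e ∧ LowerSemicontinuous e := by
  let := metrizableSpaceMetric U
  obtain ⟨g, hg, hgs⟩ := exists_nat_bool_continuous_surjective_of_compact U
  obtain ⟨f, -, hf, hfi⟩ := IsClosed.exists_nat_bool_injection_of_not_countable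
    (C := (univ : Set ℝ)) isClosed_univ (by
      rw [countable_univ_iff]; exact not_countable_iff.2 inferInstance)
  have : ∀ u, ∃ x, g x = u ∧ ∀ x', g x' = u → f x ≤ f x' := by
    intro u
    have hc : IsClosed (g ⁻¹' {u}) := isClosed_singleton.preimage hg
    obtain ⟨x, hx, hmin⟩ := hc.isCompact.exists_isMinOn (hgs u) hf.continuousOn
    exact ⟨x, hx, fun x' hx' => hmin hx'⟩
  choose s hs hsm using this
  refine ⟨fun u => f (s u), fun u v huv => ?_, ?_⟩
  · have := hfi huv
    rw [← hs u, ← hs v, this]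
  · rw [lowerSemicontinuous_iff_isClosed_preimage]
    intro a
    have : (fun u => f (s u)) ⁻¹' Iic a = g '' (f ⁻¹' Iic a) := by
      ext u
      constructor
      · intro h
        exact ⟨s u, h, hs u⟩
      · rintro ⟨x, hx, rfl⟩
        exact (hsm _ x rfl).trans hx
    rw [this]
    exact ((isClosed_Iic.preimage hf).isCompact.image hg).isClosed

/-- Measurable selection of minimizers. -/
theorem exists_measurable_argmin {Y U : Type*} [TopologicalSpace Y] [PolishSpace Y]
    [MeasurableSpace Y] [BorelSpace Y] [TopologicalSpace U] [MetrizableSpace U] [CompactSpace U]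
    [Nonempty U] [MeasurableSpace U] [BorelSpace U]
    {h : Y × U → ℝ} (hh : Measurable h) (hlsc : ∀ y, LowerSemicontinuous fun u => h (y, u)) :
    ∃ s : Y → U, Measurable s ∧ ∀ y u, h (y, s y) ≤ h (y, u) := by
  have : PolishSpace U := by
    let := metrizableSpaceMetric U
    infer_instance
  obtain ⟨e, hei, hel⟩ := exists_injective_lsc U
  obtain ⟨M1, -, hM1, hc1, hn1, ho1⟩ := argmin_set (M := (univ : Set (Y × U))) MeasurableSet.univ
    (by simp) (fun y => ⟨Classical.arbitrary U, mem_univ _⟩) hh hlsc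
  obtain ⟨M2, hs2, hM2, hc2, hn2, ho2⟩ := argmin_set hM1 hc1 hn1
    (h := fun p => e p.2) (hel.measurable.comp measurable_snd) (fun y => hel)
  choose s hs using hn2
  have huniq : ∀ y u, (y, u) ∈ M2 → u = s y := fun y u hu =>
    hei (le_antisymm (ho2 y u (s y) hu (hs2 (hs y))) (ho2 y (s y) u (hs y) (hs2 hu)))
  refine ⟨s, ?_, fun y u => ho1 y _ u (hs2 (hs y)) (mem_univ _)⟩
  refine measurable_of_isClosed fun F hF => ?_
  have : s ⁻¹' F = Prod.fst '' (M2 ∩ Prod.snd ⁻¹' F) := by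
    ext y
    constructor
    · intro hy
      exact ⟨(y, s y), ⟨hs y, hy⟩, rfl⟩
    · rintro ⟨⟨y', u⟩, ⟨h1, h2⟩, rfl⟩
      have := huniq _ _ h1
      subst this
      exact h2
  rw [this]
  exact measurableSet_fst_image (hM2.inter (measurable_snd hF.measurableSet))
    fun y => (hc2 y).inter hF


theorem exists_cond_cost {Ω X : Type*} [MeasurableSpace Ω] [StandardBorelSpace Ω] [Nonempty Ω]
    [TopologicalSpace X] [MetrizableSpace X] [MeasurableSpace X] [OpensMeasurableSpace X]
    (ν : Measure Ω) [IsProbabilityMeasure ν] {T : Ω → Ω} (hT : Measurable T)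
    {c : Ω × X → ℝ} (hc : Measurable c) (h0 : ∀ p, 0 ≤ c p) {C : ℝ} (hC : ∀ p, c p ≤ C)
    (hl : ∀ y, LowerSemicontinuous fun u => c (y, u)) :
    ∃ d : Ω × X → ℝ, Measurable d ∧ (∀ p, 0 ≤ d p) ∧ (∀ p, d p ≤ C) ∧
      (∀ y, LowerSemicontinuous fun u => d (y, u)) ∧
      (∀ g : Ω → X, Measurable g → ∫ y, c (y, g (T y)) ∂ν = ∫ y, d (T y, g (T y)) ∂ν) ∧
      ∀ u u', (∀ y, c (y, u) = c (y, u')) → ∀ y, d (y, u) = d (y, u') := by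
  let κ : ProbabilityTheory.Kernel Ω Ω := ProbabilityTheory.condDistrib id T ν
  have hcu : ∀ u, Measurable fun y => c (y, u) := fun u => hc.comp (by fun_prop)
  have hint : ∀ (μ : Measure Ω) [IsProbabilityMeasure μ] (u : X),
      Integrable (fun y => c (y, u)) μ := fun μ _ u =>
    Integrable.of_bound (hcu u).aestronglyMeasurable C (ae_of_all _ fun y => by
      rw [Real.norm_eq_abs, abs_of_nonneg (h0 _)]; exact hC _)
  let d : Ω × X → ℝ := fun p => ∫ y, c (y, p.2) ∂(κ p.1)
  have hdm : Measurable d := by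
    have h1 : StronglyMeasurable (Function.uncurry fun (p : Ω × X) (y : Ω) => c (y, p.2)) :=
      (hc.comp (by fun_prop : Measurable fun q : (Ω × X) × Ω => (q.2, q.1.2))).stronglyMeasurable
    have h2 := h1.integral_kernel_prod_right (κ := ProbabilityTheory.Kernel.prodMkRight X κ)
    exact h2.measurable
  refine ⟨d, hdm, fun p => integral_nonneg fun y => h0 _, fun p => ?_, fun z => ?_, fun g hg => ?_,
    fun u u' h y => by simp only [d, h]⟩
  · calc d p ≤ ∫ y, C ∂(κ p.1) := integral_mono (hint _ _) (integrable_const _) fun y => hC _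
      _ = C := by simp
  · have hof : ∀ u, ENNReal.ofReal (d (z, u)) = ∫⁻ y, ENNReal.ofReal (c (y, u)) ∂(κ z) := fun u =>
      ofReal_integral_eq_lintegral_ofReal (hint _ u) (ae_of_all _ fun y => h0 _)
    rw [lowerSemicontinuous_iff_isClosed_preimage]
    intro a
    let := metrizableSpaceMetric X
    refine IsSeqClosed.isClosed fun v u hv hu => ?_
    simp only [mem_preimage, mem_Iic] at hv ⊢
    have ha : 0 ≤ a := le_trans (integral_nonneg fun y => h0 _) (hv 0)
    rw [← ENNReal.ofReal_le_ofReal_iff ha, hof]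
    calc ∫⁻ y, ENNReal.ofReal (c (y, u)) ∂(κ z)
        ≤ ∫⁻ y, Filter.liminf (fun n => ENNReal.ofReal (c (y, v n))) Filter.atTop ∂(κ z) := by
          refine lintegral_mono fun y => ?_
          have h1 : LowerSemicontinuous fun u => ENNReal.ofReal (c (y, u)) :=
            ENNReal.continuous_ofReal.comp_lowerSemicontinuous (hl y)
              (fun a b h => ENNReal.ofReal_le_ofReal h)
          have h2 := (h1.lowerSemicontinuousAt u).le_liminf
          exact h2.trans (Filter.liminf_le_liminf_of_le hu)
      _ ≤ Filter.liminf (fun n => ∫⁻ y, ENNReal.ofReal (c (y, v n)) ∂(κ z)) Filter.atTop :=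
          lintegral_liminf_le fun n => (hcu _).ennreal_ofReal
      _ ≤ Filter.liminf (fun _ : ℕ => ENNReal.ofReal a) Filter.atTop := by
          refine Filter.liminf_le_liminf (Filter.Eventually.of_forall fun n => ?_)
          rw [← hof]
          exact ENNReal.ofReal_le_ofReal (hv n)
      _ = ENNReal.ofReal a := Filter.liminf_const _
  · have hcg : Measurable fun q : Ω × Ω => c (q.2, g q.1) := hc.comp (by fun_prop)
    have e1 : ∫ y, c (y, g (T y)) ∂ν = ∫ q, c (q.2, g q.1) ∂(ν.map fun y => (T y, id y)) := by
      rw [integral_map (by fun_prop) hcg.aestronglyMeasurable]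
      rfl
    rw [e1, ← ProbabilityTheory.compProd_map_condDistrib (by fun_prop : AEMeasurable id ν),
      Measure.integral_compProd]
    · rw [integral_map hT.aemeasurable]
      exact (hdm.comp (by fun_prop : Measurable fun z => (z, g z))).aestronglyMeasurable
    · have := Measure.isProbabilityMeasure_map (μ := ν) hT.aemeasurable
      exact Integrable.of_bound hcg.aestronglyMeasurable C (ae_of_all _ fun y => by
        rw [Real.norm_eq_abs, abs_of_nonneg (h0 _)]; exact hC _)

theorem lsc_min {X U : Type*} [TopologicalSpace X] [TopologicalSpace U] [CompactSpace U]
    {h : X × U → ℝ} (hh : LowerSemicontinuous h) {s : X → U}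
    (hs : ∀ x u, h (x, s x) ≤ h (x, u)) : LowerSemicontinuous fun x => h (x, s x) := by
  rw [lowerSemicontinuous_iff_isClosed_preimage]
  intro a
  have : (fun x => h (x, s x)) ⁻¹' Iic a = Prod.fst '' (h ⁻¹' Iic a) := by
    ext x
    constructor
    · intro hx
      exact ⟨(x, s x), hx, rfl⟩
    · rintro ⟨⟨x', u⟩, hx, rfl⟩
      exact (hs _ u).trans hx
  rw [this]
  exact isClosedMap_fst_of_compactSpace _ (hh.isClosed_preimage a)

/-- Admissible policies. -/
def Adm {N : ℕ} {Y U : Fin N → Type*} [∀ i, MeasurableSpace (Y i)] [∀ i, MeasurableSpace (U i)]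
    (γ : ∀ i, (∀ j, Y j) → U i) : Prop :=
  (∀ i, Measurable (γ i)) ∧
    (∀ (i : Fin N) (y y' : ∀ j, Y j), (∀ j : Fin N, j ≤ i → y j = y' j) → γ i y = γ i y')

theorem dp
    {N : ℕ} {Y U : Fin N → Type*}
    [∀ i, TopologicalSpace (Y i)] [∀ i, PolishSpace (Y i)] [∀ i, Nonempty (Y i)]
    [∀ i, MeasurableSpace (Y i)] [∀ i, BorelSpace (Y i)]
    [∀ i, TopologicalSpace (U i)] [∀ i, CompactSpace (U i)]
    [∀ i, PolishSpace (U i)] [∀ i, Nonempty (U i)]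
    [∀ i, MeasurableSpace (U i)] [∀ i, BorelSpace (U i)]
    (ν : Measure (∀ i, Y i)) [IsProbabilityMeasure ν] (C : ℝ) (k : ℕ) (hk : k ≤ N) :
    ∀ (c : (∀ i, Y i) × (∀ i, U i) → ℝ), Measurable c → (∀ p, 0 ≤ c p) → (∀ p, c p ≤ C) →
      (∀ y : ∀ i, Y i, LowerSemicontinuous fun u : ∀ i, U i => c (y, u)) →
      (∀ y (u u' : ∀ i, U i), (∀ j : Fin N, j.val < k → u j = u' j) → c (y, u) = c (y, u')) →
      ∃ γ : ∀ i, (∀ j, Y j) → U i, Adm γ ∧ ∀ γ' : ∀ i, (∀ j, Y j) → U i, Adm γ' →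
        (∫ y, c (y, fun i => γ i y) ∂ν) ≤ ∫ y, c (y, fun i => γ' i y) ∂ν := by
  induction k with
  | zero =>
    intro c _ _ _ _ hdep
    refine ⟨fun i _ => Classical.arbitrary _, ⟨fun i => measurable_const, fun _ _ _ _ => rfl⟩,
      fun γ' _ => le_of_eq ?_⟩
    exact integral_congr_ae (ae_of_all _ fun y => hdep y _ _ (by simp))
  | succ k ih =>
    intro c hc h0 hC hl hdep
    let m : Fin N := ⟨k, hk⟩
    let y0 : ∀ j, Y j := fun j => Classical.arbitrary _
    let T : (∀ j, Y j) → ∀ j, Y j := fun y j => if j ≤ m then y j else y0 j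
    have hT : Measurable T := by
      refine measurable_pi_lambda _ fun j => ?_
      by_cases hj : j ≤ m
      · simp only [T, hj, if_true]; exact measurable_pi_apply j
      · simp only [T, hj, if_false]; exact measurable_const
    have hTe : ∀ y j, j ≤ m → T y j = y j := fun y j hj => by simp [T, hj]
    have hTc : ∀ y y', (∀ j ≤ m, y j = y' j) → T y = T y' := by
      intro y y' h
      funext j
      by_cases hj : j ≤ m
      · simp [T, hj, h j hj]
      · simp [T, hj]
    have hTT : ∀ y, T (T y) = T y := fun y => hTc _ _ (hTe y)
    have hAdmT : ∀ γ' : ∀ i, (∀ j, Y j) → U i, Adm γ' → ∀ y, ∀ j ≤ m, γ' j y = γ' j (T y) :=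
      fun γ' h y j hj => h.2 j _ _ fun i hi => (hTe y i (hi.trans hj)).symm
    obtain ⟨d, hd, hd0, hdC, hdl, hdint, hddep⟩ := exists_cond_cost ν hT hc h0 hC hl
    have hddep' : ∀ z (u u' : ∀ i, U i), (∀ j : Fin N, j.val < k + 1 → u j = u' j) →
        d (z, u) = d (z, u') := fun z u u' h => hddep u u' (fun y => hdep y u u' h) z
    let h : ((∀ i, Y i) × (∀ i, U i)) × U m → ℝ := fun p => d (p.1.1, update p.1.2 m p.2)
    have hh : Measurable h := by
      have : Measurable fun p : ((∀ i, Y i) × (∀ i, U i)) × U m => update p.1.2 m p.2 :=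
        measurable_update'.comp
          (by fun_prop : Measurable fun p : ((∀ i, Y i) × (∀ i, U i)) × U m => (p.1.2, p.2))
      exact hd.comp (by fun_prop)
    have hhl : ∀ z, LowerSemicontinuous fun q : (∀ i, U i) × U m => h ((z, q.1), q.2) := by
      intro z
      exact (hdl z).comp (continuous_fst.update m continuous_snd)
    obtain ⟨s, hs, hsmin⟩ := exists_measurable_argmin hh
      (fun p => (hhl p.1).comp (by fun_prop : Continuous fun u : U m => (p.2, u)))
    let V : (∀ i, Y i) × (∀ i, U i) → ℝ := fun p => h (p, s p)
    have hV : Measurable V := hh.comp (by fun_prop)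
    have hVl : ∀ z, LowerSemicontinuous fun u => V (z, u) := fun z =>
      lsc_min (hhl z) (s := fun u => s (z, u)) (fun u v => hsmin (z, u) v)
    have hVd : ∀ p, V p ≤ d p := by
      intro p
      have := hsmin p (p.2 m)
      simpa [h] using this
    have hVdep : ∀ z (u u' : ∀ i, U i), (∀ j : Fin N, j.val < k → u j = u' j) →
        V (z, u) = V (z, u') := by
      intro z u u' huu
      have : ∀ v, h ((z, u), v) = h ((z, u'), v) := by
        intro v
        refine hddep' z _ _ fun j hj => ?_
        by_cases hjm : j = m
        · subst hjm; simp
        · have : j.val ≠ k := fun e => hjm (Fin.ext e)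
          simp only [update_of_ne hjm]
          exact huu j (by omega)
      apply le_antisymm
      · exact (hsmin (z, u) (s (z, u'))).trans (this _).le
      · exact (hsmin (z, u') (s (z, u))).trans (this _).ge
    obtain ⟨γs, hγs, hopt⟩ := ih (by omega) (fun p => V (T p.1, p.2)) (hV.comp (by fun_prop))
      (fun p => hd0 _) (fun p => hdC _) (fun y => hVl (T y)) (fun y => hVdep (T y))
    let gs : (∀ i, Y i) → ∀ i, U i := fun z j => γs j z
    have hgs : Measurable gs := measurable_pi_lambda _ hγs.1
    let γ : ∀ i, (∀ j, Y j) → U i := update γs m (fun y => s (T y, gs (T y)))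
    have hγ : Adm γ := by
      constructor
      · intro i
        by_cases him : i = m
        · subst him
          simp only [γ, update_self]
          exact hs.comp (by fun_prop)
        · simp only [γ, update_of_ne him]
          exact hγs.1 i
      · intro i y y' hyy
        by_cases him : i = m
        · subst him
          simp only [γ, update_self]
          rw [hTc y y' hyy]
        · simp only [γ, update_of_ne him]
          exact hγs.2 i y y' hyy
    have hcost : ∀ γ' : ∀ i, (∀ j, Y j) → U i, Adm γ' →
        ∫ y, c (y, fun i => γ' i y) ∂ν = ∫ y, d (T y, fun i => γ' i (T y)) ∂ν := by
      intro γ' h'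
      rw [← hdint (fun z i => γ' i z) (measurable_pi_lambda _ h'.1)]
      refine integral_congr_ae (ae_of_all _ fun y => hdep y _ _ fun j hj => ?_)
      exact hAdmT γ' h' y j (Nat.lt_succ_iff.1 hj)
    have hVcost : ∀ γ' : ∀ i, (∀ j, Y j) → U i, Adm γ' →
        ∫ y, V (T y, fun i => γ' i y) ∂ν = ∫ y, V (T y, fun i => γ' i (T y)) ∂ν := by
      intro γ' h'
      refine integral_congr_ae (ae_of_all _ fun y => hVdep (T y) _ _ fun j hj => ?_)
      exact hAdmT γ' h' y j (le_of_lt hj)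
    refine ⟨γ, hγ, fun γ' hγ' => ?_⟩
    have hm' : Measurable fun y => ((T y, fun i => γ' i (T y)) : (∀ i, Y i) × (∀ i, U i)) :=
      hT.prodMk (measurable_pi_lambda _ fun i => (hγ'.1 i).comp hT)
    calc ∫ y, c (y, fun i => γ i y) ∂ν = ∫ y, d (T y, fun i => γ i (T y)) ∂ν := hcost γ hγ
      _ = ∫ y, V (T y, fun i => γs i (T y)) ∂ν := by
          refine integral_congr_ae (ae_of_all _ fun y => ?_)
          have : (fun i => γ i (T y)) = update (gs (T y)) m (s (T y, gs (T y))) := by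
            funext i
            by_cases him : i = m
            · subst him
              simp only [γ, update_self, hTT]
            · simp only [γ, update_of_ne him, gs]
          simp only [this]
          rfl
      _ = ∫ y, V (T y, fun i => γs i y) ∂ν := (hVcost γs hγs).symm
      _ ≤ ∫ y, V (T y, fun i => γ' i y) ∂ν := hopt γ' hγ'
      _ = ∫ y, V (T y, fun i => γ' i (T y)) ∂ν := hVcost γ' hγ'
      _ ≤ ∫ y, d (T y, fun i => γ' i (T y)) ∂ν := by
          refine integral_mono ?_ ?_ fun y => hVd _
          · exact Integrable.of_bound (hV.comp hm').aestronglyMeasurable C (ae_of_all _ fun y => by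
              rw [Real.norm_eq_abs, abs_of_nonneg (hd0 _)]; exact hdC _)
          · exact Integrable.of_bound (hd.comp hm').aestronglyMeasurable C (ae_of_all _ fun y => by
              rw [Real.norm_eq_abs, abs_of_nonneg (hd0 _)]; exact hdC _)
      _ = ∫ y, c (y, fun i => γ' i y) ∂ν := (hcost γ' hγ').symm

theorem polish_of_compact (X : Type*) [TopologicalSpace X] [CompactSpace X] [MetrizableSpace X] :
    PolishSpace X := by
  let := metrizableSpaceMetric X
  infer_instance

end StaticTeam

/-- Theorem 5.6 of the paper.  Static team with a classical
(expanding) information structure: the measurements `(y¹,…,yᴺ)` have a fixed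
joint law `ν` on the compact metrizable product `∏ₖ Yᵏ` (unaffected by any
actions), and decision maker `n` applies `uⁿ = γⁿ(y¹,…,yⁿ)` — encoded here as a
measurable map on the full tuple depending only on the coordinates `≤ n`.  If
the bounded Borel measurable cost `c̃ : ∏ₖYᵏ × ∏ₖUᵏ → [0,∞)` is, for every
fixed `y`, jointly lower semi-continuous in the action tuple `u`, then a
deterministic optimal team policy exists. -/
theorem static_team_classical_exists_optimal
    {N : ℕ} {Y U : Fin N → Type*}
    [∀ i, TopologicalSpace (Y i)] [∀ i, CompactSpace (Y i)]
    [∀ i, TopologicalSpace.MetrizableSpace (Y i)] [∀ i, Nonempty (Y i)]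
    [∀ i, MeasurableSpace (Y i)] [∀ i, BorelSpace (Y i)]
    [∀ i, TopologicalSpace (U i)] [∀ i, CompactSpace (U i)]
    [∀ i, TopologicalSpace.MetrizableSpace (U i)] [∀ i, Nonempty (U i)]
    [∀ i, MeasurableSpace (U i)] [∀ i, BorelSpace (U i)]
    (ν : Measure (∀ i, Y i)) [IsProbabilityMeasure ν]
    (c : (∀ i, Y i) × (∀ i, U i) → ℝ)
    (hc_meas : Measurable c)
    (hc_nonneg : ∀ p, 0 ≤ c p)
    (hc_bdd : ∃ C : ℝ, ∀ p, c p ≤ C)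
    (hc_lsc_u : ∀ y : ∀ i, Y i,
      LowerSemicontinuous fun u : ∀ i, U i => c (y, u)) :
    ∃ γ : ∀ i, (∀ j, Y j) → U i,
      ((∀ i, Measurable (γ i)) ∧
        (∀ (i : Fin N) (y y' : ∀ j, Y j),
          (∀ j : Fin N, j ≤ i → y j = y' j) → γ i y = γ i y')) ∧
      ∀ γ' : ∀ i, (∀ j, Y j) → U i,
        ((∀ i, Measurable (γ' i)) ∧
          (∀ (i : Fin N) (y y' : ∀ j, Y j),
            (∀ j : Fin N, j ≤ i → y j = y' j) → γ' i y = γ' i y')) →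
        (∫ y, c (y, fun i => γ i y) ∂ν) ≤ ∫ y, c (y, fun i => γ' i y) ∂ν := by
  have hY : ∀ i, PolishSpace (Y i) := fun i => StaticTeam.polish_of_compact (Y i)
  have hU : ∀ i, PolishSpace (U i) := fun i => StaticTeam.polish_of_compact (U i)
  obtain ⟨C, hC⟩ := hc_bdd
  exact StaticTeam.dp ν C N le_rfl c hc_meas hc_nonneg hC hc_lsc_u
    (fun y u u' h => by rw [show u = u' from funext fun j => h j j.isLt])
end

section
/- Let k > 0 and let Y and W be independent standard Gaussian random variables (mean zero, variance one). For Borel measurable γ¹, γ² : ℝ → ℝ define J(γ¹, γ²) = E[ k·(γ¹(Y) − Y)² + (γ²(γ¹(Y) + W) − γ¹(Y))² ] ∈ [0, ∞]. Then there exists a pair of Borel measurable functions (γ¹*, γ²*) attaining the infimum of J over all pairs of Borel measurable functions; i.e., Witsenhausen's counterexample admits an optimal policy. -/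
open MeasureTheory ProbabilityTheory
open scoped ENNReal

/-- The expected cost in Witsenhausen's counterexample: `Y` and `W` are
independent standard Gaussians, the first decision maker applies `u¹ = γ¹ Y`,
the second observes `γ¹ Y + W` and applies `u² = γ² (γ¹ Y + W)`, and the cost
is `k (u¹ - Y)² + (u² - u¹)²`; the value lies in `[0, ∞]`. -/
noncomputable def witsenhausenCost (k : ℝ) (γ₁ γ₂ : ℝ → ℝ) : ℝ≥0∞ :=
  ∫⁻ p : ℝ × ℝ,
    ENNReal.ofReal
      (k * (γ₁ p.1 - p.1) ^ 2 + (γ₂ (γ₁ p.1 + p.2) - γ₁ p.1) ^ 2)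
    ∂((gaussianReal 0 1).prod (gaussianReal 0 1))

/-- joint density of the observation -/
@[irreducible]
noncomputable def wp (u z : ℝ) : ℝ := gaussianPDFReal u 1 z

lemma wp_eq (u z : ℝ) : wp u z = (Real.sqrt (2 * Real.pi))⁻¹ * Real.exp (-(z - u) ^ 2 / 2) := by
  simp [wp, gaussianPDFReal]

lemma wp_pos (u z : ℝ) : 0 < wp u z := by
  rw [wp]; exact gaussianPDFReal_pos _ _ _ one_ne_zero

lemma wp_cont : Continuous (fun q : ℝ × ℝ => wp q.1 q.2) := by
  simp only [wp_eq]; fun_prop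

@[fun_prop]
lemma wp_cont' {X : Type*} [TopologicalSpace X] {f g : X → ℝ} (hf : Continuous f)
    (hg : Continuous g) : Continuous fun x => wp (f x) (g x) :=
  Continuous.comp (g := fun q : ℝ × ℝ => wp q.1 q.2) wp_cont (hf.prodMk hg)

@[fun_prop]
lemma wp_meas' {X : Type*} [MeasurableSpace X] {f g : X → ℝ} (hf : Measurable f)
    (hg : Measurable g) : Measurable fun x => wp (f x) (g x) :=
  Measurable.comp (g := fun q : ℝ × ℝ => wp q.1 q.2) wp_cont.measurable (hf.prodMk hg)

lemma wp_le (u z : ℝ) : wp u z * (1 + (z - u) ^ 2 / 2) ≤ 1 := by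
  rw [wp_eq]
  have h1 : (Real.sqrt (2 * Real.pi))⁻¹ ≤ 1 := by
    apply inv_le_one_of_one_le₀
    rw [Real.one_le_sqrt]
    nlinarith [Real.pi_gt_three]
  have h2 : Real.exp (-(z - u) ^ 2 / 2) * (1 + (z - u) ^ 2 / 2) ≤ 1 := by
    have := Real.add_one_le_exp ((z - u) ^ 2 / 2)
    calc _ ≤ Real.exp (-(z - u) ^ 2 / 2) * Real.exp ((z - u) ^ 2 / 2) := by
          apply mul_le_mul_of_nonneg_left _ (Real.exp_pos _).le
          linarith
      _ = 1 := by rw [← Real.exp_add]; ring_nf; simp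
  have h3 : 0 ≤ Real.exp (-(z - u) ^ 2 / 2) * (1 + (z - u) ^ 2 / 2) := by positivity
  have h4 : 0 ≤ (Real.sqrt (2 * Real.pi))⁻¹ := by positivity
  rw [mul_assoc]
  exact mul_le_one₀ h1 h3 h2

lemma wp_le_one (u z : ℝ) : wp u z ≤ 1 := by
  nlinarith [wp_le u z, wp_pos u z, mul_nonneg (wp_pos u z).le (sq_nonneg (z - u))]

lemma wp_sq_le (u z : ℝ) : wp u z * u ^ 2 ≤ 2 * z ^ 2 + 4 := by
  have h1 := wp_le u z
  have h2 := wp_le_one u z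
  have h3 : wp u z * u ^ 2 ≤ wp u z * (2 * z ^ 2 + 2 * (z - u) ^ 2) :=
    mul_le_mul_of_nonneg_left (by nlinarith [sq_nonneg (2 * z - u)]) (wp_pos u z).le
  have h4 : wp u z * z ^ 2 ≤ 1 * z ^ 2 := mul_le_mul_of_nonneg_right h2 (sq_nonneg z)
  nlinarith [wp_pos u z]

lemma wp_abs_le (u z : ℝ) : |wp u z * u| ≤ 2 * z ^ 2 + 5 := by
  rw [abs_mul, abs_of_pos (wp_pos u z)]
  have h1 := wp_sq_le u z
  have h2 := wp_le_one u z
  have h3 : wp u z * |u| ≤ wp u z * (1 + u ^ 2) :=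
    mul_le_mul_of_nonneg_left (by nlinarith [sq_abs u, sq_nonneg (|u| - 1)]) (wp_pos u z).le
  linarith

/-- second stage cost -/
noncomputable def wh (g : ℝ → ℝ) (u : ℝ) : ℝ≥0∞ :=
  ∫⁻ z, ENNReal.ofReal (wp u z * (g z - u) ^ 2)

lemma wint_meas {g : ℝ → ℝ} (hg : Measurable g) :
    Measurable (fun q : ℝ × ℝ => ENNReal.ofReal (wp q.1 q.2 * (g q.2 - q.1) ^ 2)) := by
  have := wp_cont.measurable
  fun_prop

lemma wh_meas {g : ℝ → ℝ} (hg : Measurable g) : Measurable (wh g) :=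
  (wint_meas hg).lintegral_prod_right'

lemma wh_shift {g : ℝ → ℝ} (hg : Measurable g) (u : ℝ) :
    ∫⁻ w, ENNReal.ofReal ((g (u + w) - u) ^ 2) ∂(gaussianReal 0 1) = wh g u := by
  have h1 : Measurable fun z => ENNReal.ofReal ((g z - u) ^ 2) := by fun_prop
  have h2 := gaussianReal_map_const_add (μ := 0) (v := 1) u
  rw [← lintegral_map (f := fun z => ENNReal.ofReal ((g z - u) ^ 2)) h1 (by fun_prop), h2,
    gaussianReal_of_var_ne_zero _ one_ne_zero,
    lintegral_withDensity_eq_lintegral_mul _ (measurable_gaussianPDF _ _) h1]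
  unfold wh
  congr 1
  ext z
  simp only [Pi.mul_apply, gaussianPDF, zero_add]
  rw [ENNReal.ofReal_mul (wp_pos u z).le, wp]

lemma cost_eq {k : ℝ} (hk : 0 < k) {g₁ g₂ : ℝ → ℝ} (h₁ : Measurable g₁) (h₂ : Measurable g₂) :
    witsenhausenCost k g₁ g₂ =
      ∫⁻ y, (ENNReal.ofReal (k * (g₁ y - y) ^ 2) + wh g₂ (g₁ y)) ∂(gaussianReal 0 1) := by
  unfold witsenhausenCost
  rw [lintegral_prod _ (by fun_prop)]
  congr 1
  ext y
  rw [← wh_shift h₂]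
  simp_rw [ENNReal.ofReal_add (mul_nonneg hk.le (sq_nonneg (g₁ y - y))) (sq_nonneg _)]
  rw [lintegral_add_left (by fun_prop)]
  simp

lemma wh_lsc {g : ℝ → ℝ} (hg : Measurable g) : LowerSemicontinuous (wh g) := by
  rw [lowerSemicontinuous_iff_le_liminf]
  intro u
  have hm : ∀ u, Measurable fun z => ENNReal.ofReal (wp u z * (g z - u) ^ 2) := fun u => by
    fun_prop
  refine le_trans ?_ (lintegral_liminf_le (u := nhds u) hm)
  apply lintegral_mono
  intro z
  have hc : Continuous fun u => ENNReal.ofReal (wp u z * (g z - u) ^ 2) := by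
    exact ENNReal.continuous_ofReal.comp (by fun_prop)
  exact (hc.tendsto u).liminf_eq.ge

lemma exists_argmin {k : ℝ} (hk : 0 < k) {g : ℝ → ℝ} (hg : Measurable g) {u₀ : ℝ}
    (h0 : wh g u₀ < ⊤) (y : ℝ) :
    ∃ u, ∀ v, ENNReal.ofReal (k * (u - y) ^ 2) + wh g u ≤
      ENNReal.ofReal (k * (v - y) ^ 2) + wh g v := by
  set c : ℝ → ℝ≥0∞ := fun u => ENNReal.ofReal (k * (u - y) ^ 2) + wh g u with hc
  have hlsc : LowerSemicontinuous c := by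
    apply LowerSemicontinuous.add _ (wh_lsc hg)
    apply Continuous.lowerSemicontinuous
    exact ENNReal.continuous_ofReal.comp (by fun_prop)
  have hc0 : c u₀ ≠ ⊤ := by simp [hc, h0.ne]
  set c0 := (c u₀).toReal
  have hc0' : 0 ≤ c0 := ENNReal.toReal_nonneg
  set r := |u₀ - y| + c0 / k + 1
  have hr1 : 0 ≤ c0 / k := by positivity
  have hu0 : u₀ ∈ Metric.closedBall y r := by
    rw [Metric.mem_closedBall, Real.dist_eq]
    simp only [r]; linarith
  obtain ⟨u, hu, hmin⟩ := (hlsc.lowerSemicontinuousOn _).exists_isMinOn ⟨u₀, hu0⟩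
    (isCompact_closedBall y r)
  refine ⟨u, fun v => ?_⟩
  by_cases hv : v ∈ Metric.closedBall y r
  · exact hmin hv
  · refine le_trans (hmin hu0) ?_
    rw [Metric.mem_closedBall, Real.dist_eq, not_le] at hv
    refine le_trans ?_ le_self_add
    rw [← ENNReal.ofReal_toReal hc0]
    apply ENNReal.ofReal_le_ofReal
    have h1 : c0 / k + 1 ≤ |v - y| := by
      have := abs_nonneg (u₀ - y)
      simp only [r] at hv; linarith
    have h2 : c0 / k ≤ (v - y) ^ 2 := by
      rw [← sq_abs]; nlinarith
    rw [div_le_iff₀ hk] at h2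
    linarith

lemma best_response {k : ℝ} (hk : 0 < k) {g₁ g₂ : ℝ → ℝ} (h₁ : Measurable g₁)
    (h₂ : Measurable g₂) (hJ : witsenhausenCost k g₁ g₂ < ⊤) :
    ∃ g, Monotone g ∧ witsenhausenCost k g g₂ ≤ witsenhausenCost k g₁ g₂ := by
  have hex : ∃ u₀, wh g₂ u₀ < ⊤ := by
    rw [cost_eq hk h₁ h₂] at hJ
    have hm := wh_meas h₂
    have := ae_lt_top (by fun_prop) hJ.ne
    obtain ⟨y, hy⟩ := this.exists
    exact ⟨g₁ y, lt_of_le_of_lt le_add_self hy⟩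
  obtain ⟨u₀, h0⟩ := hex
  choose g hg using exists_argmin hk h₂ h0
  have hfin : ∀ y, wh g₂ (g y) ≠ ⊤ := fun y => by
    refine (lt_of_le_of_lt (le_trans le_add_self (hg y u₀)) ?_).ne
    simp [h0]
  have hmono : Monotone g := by
    intro y y' hyy
    by_contra! hlt
    have e1 := hg y (g y')
    have e2 := hg y' (g y)
    rw [← ENNReal.ofReal_toReal (hfin y), ← ENNReal.ofReal_toReal (hfin y'),
      ← ENNReal.ofReal_add (by positivity) ENNReal.toReal_nonneg,
      ← ENNReal.ofReal_add (by positivity) ENNReal.toReal_nonneg,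
      ENNReal.ofReal_le_ofReal_iff (by positivity)] at e1 e2
    have hne : y < y' := lt_of_le_of_ne hyy (by rintro rfl; exact lt_irrefl _ hlt)
    have : 0 < k * ((g y - g y') * (y' - y)) :=
      mul_pos hk (mul_pos (by linarith) (by linarith))
    nlinarith
  refine ⟨g, hmono, ?_⟩
  rw [cost_eq hk h₁ h₂, cost_eq hk hmono.measurable h₂]
  exact lintegral_mono fun y => hg y _

lemma gauss_Icc_pos (a : ℝ) : 0 < gaussianReal 0 1 (Set.Icc a (a + 1)) := by
  rw [pos_iff_ne_zero]
  intro h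
  have := gaussianReal_absolutelyContinuous' 0 (one_ne_zero) h
  simp at this

lemma bound_aux {k : ℝ} (hk : 0 < k) {C : ℝ≥0∞} (hC : C ≠ ⊤) (a : ℝ) :
    ∃ M : ℝ, 0 ≤ M ∧ ∀ g : ℝ → ℝ, ∫⁻ y, ENNReal.ofReal (k * (g y - y) ^ 2) ∂(gaussianReal 0 1) ≤ C →
      ∃ y ∈ Set.Icc a (a + 1), |g y - y| ≤ M := by
  set m := gaussianReal 0 1 (Set.Icc a (a + 1)) with hm
  have hm0 := gauss_Icc_pos a
  have hmt : C / m ≠ ⊤ := ENNReal.div_ne_top hC hm0.ne'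
  set D := (C / m).toReal
  have hD : 0 ≤ D := ENNReal.toReal_nonneg
  refine ⟨D / k + 1, by positivity, fun g hg => ?_⟩
  by_contra! hcon
  have h1 : ∀ y ∈ Set.Icc a (a + 1), ENNReal.ofReal (D + k) ≤ ENNReal.ofReal (k * (g y - y) ^ 2) := by
    intro y hy
    apply ENNReal.ofReal_le_ofReal
    have h2 := hcon y hy
    have h3 : 0 ≤ D / k := by positivity
    have h4 : D / k + 1 ≤ (g y - y) ^ 2 := by rw [← sq_abs]; nlinarith
    calc D + k = k * (D / k + 1) := by field_simp
      _ ≤ _ := mul_le_mul_of_nonneg_left h4 hk.le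
  have h2 : ENNReal.ofReal (D + k) * m ≤ C := by
    calc _ = ∫⁻ y in Set.Icc a (a + 1), ENNReal.ofReal (D + k) ∂(gaussianReal 0 1) := by simp [hm]
      _ ≤ ∫⁻ y in Set.Icc a (a + 1), ENNReal.ofReal (k * (g y - y) ^ 2) ∂(gaussianReal 0 1) :=
        setLIntegral_mono' measurableSet_Icc h1
      _ ≤ _ := (setLIntegral_le_lintegral _ _).trans hg
  have h3 : ENNReal.ofReal (D + k) ≤ C / m :=
    (ENNReal.le_div_iff_mul_le (Or.inl hm0.ne') (Or.inl (measure_ne_top _ _))).2 h2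
  rw [← ENNReal.ofReal_toReal hmt, ENNReal.ofReal_le_ofReal_iff hD] at h3
  linarith

lemma mono_bound {k : ℝ} (hk : 0 < k) {C : ℝ≥0∞} (hC : C ≠ ⊤) (q : ℝ) :
    ∃ B : ℝ, ∀ g : ℝ → ℝ, Monotone g →
      ∫⁻ y, ENNReal.ofReal (k * (g y - y) ^ 2) ∂(gaussianReal 0 1) ≤ C → g q ∈ Set.Icc (-B) B := by
  obtain ⟨M, hM0, hM⟩ := bound_aux hk hC q
  obtain ⟨N, hN0, hN⟩ := bound_aux hk hC (q - 1)
  refine ⟨M + N + |q| + 1, fun g hg hi => ?_⟩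
  obtain ⟨y, hy, hy'⟩ := hM g hi
  obtain ⟨x, hx, hx'⟩ := hN g hi
  have h1 := hg hy.1
  have h2 : g x ≤ g q := hg (by linarith [hx.2])
  rw [abs_le] at hy' hx'
  have := le_abs_self q
  have := neg_abs_le q
  obtain ⟨hy1, hy2⟩ := hy
  obtain ⟨hx1, hx2⟩ := hx
  constructor <;> linarith

open Filter Topology in
lemma helly (f : ℕ → ℝ → ℝ) (hf : ∀ n, Monotone (f n)) (B : ℝ → ℝ)
    (hB : ∀ n q, f n q ∈ Set.Icc (-B q) (B q)) :
    ∃ φ : ℕ → ℕ, StrictMono φ ∧ ∃ g : ℝ → ℝ, Monotone g ∧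
      {x | ¬ Tendsto (fun n => f (φ n) x) atTop (𝓝 (g x))}.Countable := by
  have hK : IsCompact (Set.univ.pi fun q : ℚ => Set.Icc (-B q) (B q)) :=
    isCompact_univ_pi fun q => isCompact_Icc
  obtain ⟨l, -, φ, hφ, hl⟩ := hK.tendsto_subseq (x := fun n (q : ℚ) => f n q)
    (fun n q _ => hB n q)
  rw [tendsto_pi_nhds] at hl
  replace hl : ∀ q : ℚ, Tendsto (fun n => f (φ n) q) atTop (𝓝 (l q)) := hl
  have hlm : ∀ p q : ℚ, p ≤ q → l p ≤ l q := fun p q hpq =>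
    le_of_tendsto_of_tendsto' (hl p) (hl q) fun n => hf _ (by exact_mod_cast hpq)
  let S : ℝ → Set ℝ := fun x => l '' {q : ℚ | (q : ℝ) < x}
  have hne : ∀ x, (S x).Nonempty := fun x => by
    obtain ⟨q, hq⟩ := exists_rat_lt x
    exact ⟨_, q, hq, rfl⟩
  have hub : ∀ x : ℝ, ∀ q : ℚ, x ≤ q → l q ∈ upperBounds (S x) := by
    rintro x q hq _ ⟨p, hp, rfl⟩
    exact hlm _ _ (by exact_mod_cast (le_of_lt (lt_of_lt_of_le hp hq)))
  have hbdd : ∀ x, BddAbove (S x) := fun x => by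
    obtain ⟨q, hq⟩ := exists_rat_gt x
    exact ⟨_, hub x q hq.le⟩
  let g : ℝ → ℝ := fun x => sSup (S x)
  have hg : Monotone g := fun x y hxy =>
    csSup_le_csSup (hbdd y) (hne x) (Set.image_mono fun q hq => lt_of_lt_of_le hq hxy)
  refine ⟨φ, hφ, g, hg, hg.countable_not_continuousAt.mono ?_⟩
  intro x hx hc
  apply hx
  rw [tendsto_order]
  constructor
  · intro a ha
    obtain ⟨_, ⟨q, hq, rfl⟩, hq'⟩ := exists_lt_of_lt_csSup (hne x) ha
    filter_upwards [(hl q).eventually (lt_mem_nhds hq')] with n hn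
    exact lt_of_lt_of_le hn (hf _ (le_of_lt hq))
  · intro a ha
    have h1 : ∀ᶠ y in 𝓝 x, g y < a := hc.eventually (gt_mem_nhds ha)
    obtain ⟨y, hxy, hy⟩ := (h1.filter_mono nhdsWithin_le_nhds |>.and
      (self_mem_nhdsWithin : Set.Ioi x ∈ 𝓝[>] x)).exists.imp fun y h => And.intro h.2 h.1
    obtain ⟨q, hq1, hq2⟩ := exists_rat_btwn (show x < y from hxy)
    have h2 : l q < a := lt_of_le_of_lt (le_csSup (hbdd y) ⟨q, hq2, rfl⟩) hy
    filter_upwards [(hl q).eventually (gt_mem_nhds h2)] with n hn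
    exact lt_of_le_of_lt (hf _ hq1.le) hn

/-- moments -/
noncomputable def wA (g : ℝ → ℝ) (z : ℝ) : ℝ := ∫ y, wp (g y) z ∂(gaussianReal 0 1)
/-- moments -/
noncomputable def wB (g : ℝ → ℝ) (z : ℝ) : ℝ := ∫ y, wp (g y) z * g y ∂(gaussianReal 0 1)
/-- moments -/
noncomputable def wC (g : ℝ → ℝ) (z : ℝ) : ℝ := ∫ y, wp (g y) z * g y ^ 2 ∂(gaussianReal 0 1)

lemma wp_cont_left (z : ℝ) : Continuous fun u => wp u z := by fun_prop

lemma intA {g : ℝ → ℝ} (hg : Measurable g) (z : ℝ) :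
    Integrable (fun y => wp (g y) z) (gaussianReal 0 1) := by
  refine Integrable.of_bound (C := 1) (Measurable.aestronglyMeasurable (by fun_prop)) (ae_of_all _ fun y => ?_)
  rw [Real.norm_of_nonneg (wp_pos _ _).le]; exact wp_le_one _ _

lemma intB {g : ℝ → ℝ} (hg : Measurable g) (z : ℝ) :
    Integrable (fun y => wp (g y) z * g y) (gaussianReal 0 1) := by
  exact Integrable.of_bound (C := 2 * z ^ 2 + 5) (Measurable.aestronglyMeasurable (by fun_prop)) (ae_of_all _ fun y => wp_abs_le _ _)

lemma wC_norm (u z : ℝ) : ‖wp u z * u ^ 2‖ ≤ 2 * z ^ 2 + 4 := by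
  rw [Real.norm_of_nonneg (mul_nonneg (wp_pos _ _).le (sq_nonneg _))]; exact wp_sq_le _ _

lemma intC {g : ℝ → ℝ} (hg : Measurable g) (z : ℝ) :
    Integrable (fun y => wp (g y) z * g y ^ 2) (gaussianReal 0 1) := by
  exact Integrable.of_bound (C := 2 * z ^ 2 + 4) (Measurable.aestronglyMeasurable (by fun_prop)) (ae_of_all _ fun y => wC_norm _ _)

lemma wA_pos {g : ℝ → ℝ} (hg : Measurable g) (z : ℝ) : 0 < wA g z := by
  unfold wA
  rw [integral_pos_iff_support_of_nonneg (fun y => (wp_pos _ _).le) (intA hg z)]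
  have : Function.support (fun y => wp (g y) z) = Set.univ := by
    ext y; simp [(wp_pos (g y) z).ne']
  simp [this]

lemma wmeas {g : ℝ → ℝ} (hg : Measurable g) :
    Measurable (wA g) ∧ Measurable (wB g) ∧ Measurable (wC g) := by
  have hp : Measurable fun q : ℝ × ℝ => wp (g q.2) q.1 := by fun_prop
  refine ⟨?_, ?_, ?_⟩
  · exact (StronglyMeasurable.integral_prod_right (f := fun z y => wp (g y) z)
      hp.stronglyMeasurable).measurable
  · exact (StronglyMeasurable.integral_prod_right (f := fun z y => wp (g y) z * g y)
      (Measurable.stronglyMeasurable (by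
        exact hp.mul (hg.comp measurable_snd)))).measurable
  · exact (StronglyMeasurable.integral_prod_right (f := fun z y => wp (g y) z * g y ^ 2)
      (Measurable.stronglyMeasurable (by
        exact hp.mul ((hg.comp measurable_snd).pow_const 2)))).measurable

lemma inner_eq {g : ℝ → ℝ} (hg : Measurable g) (z a : ℝ) :
    ∫⁻ y, ENNReal.ofReal (wp (g y) z * (a - g y) ^ 2) ∂(gaussianReal 0 1) =
      ENNReal.ofReal (a ^ 2 * wA g z - 2 * a * wB g z + wC g z) := by
  have e : (fun y => wp (g y) z * (a - g y) ^ 2) =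
      fun y => (a ^ 2 * wp (g y) z - 2 * a * (wp (g y) z * g y)) + wp (g y) z * g y ^ 2 := by
    ext y; ring
  have i12 : Integrable (fun y => a ^ 2 * wp (g y) z - 2 * a * (wp (g y) z * g y))
      (gaussianReal 0 1) := ((intA hg z).const_mul (a ^ 2)).sub ((intB hg z).const_mul (2 * a))
  have i1 := (intA hg z).const_mul (a ^ 2)
  have i2 := (intB hg z).const_mul (2 * a)
  have i3 := intC hg z
  rw [← ofReal_integral_eq_lintegral_ofReal]
  · rw [e, integral_add i12 i3, integral_sub i1 i2, integral_const_mul, integral_const_mul]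
    rfl
  · rw [e]; exact i12.add i3
  · exact ae_of_all _ fun y => mul_nonneg (wp_pos _ _).le (sq_nonneg _)

lemma stage2_eq {g g₂ : ℝ → ℝ} (hg : Measurable g) (h₂ : Measurable g₂) :
    ∫⁻ y, wh g₂ (g y) ∂(gaussianReal 0 1) =
      ∫⁻ z, ENNReal.ofReal (g₂ z ^ 2 * wA g z - 2 * g₂ z * wB g z + wC g z) := by
  simp only [← inner_eq hg, wh]
  rw [lintegral_lintegral_swap]
  apply Measurable.aemeasurable
  simp only [Function.uncurry_def]
  fun_prop

/-- conditional variance density -/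
noncomputable def wV (g : ℝ → ℝ) (z : ℝ) : ℝ := wC g z - wB g z ^ 2 / wA g z

lemma stage2_ge {g g₂ : ℝ → ℝ} (hg : Measurable g) (h₂ : Measurable g₂) :
    ∫⁻ z, ENNReal.ofReal (wV g z) ≤ ∫⁻ y, wh g₂ (g y) ∂(gaussianReal 0 1) := by
  rw [stage2_eq hg h₂]
  refine lintegral_mono fun z => ENNReal.ofReal_le_ofReal ?_
  have hA := wA_pos hg z
  have : g₂ z ^ 2 * wA g z - 2 * g₂ z * wB g z + wC g z - wV g z =
      (g₂ z * wA g z - wB g z) ^ 2 / wA g z := by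
    unfold wV; field_simp; ring
  have h3 : 0 ≤ (g₂ z * wA g z - wB g z) ^ 2 / wA g z := by positivity
  linarith

lemma stage2_opt {g : ℝ → ℝ} (hg : Measurable g) :
    ∫⁻ y, wh (fun z => wB g z / wA g z) (g y) ∂(gaussianReal 0 1) =
      ∫⁻ z, ENNReal.ofReal (wV g z) := by
  rw [stage2_eq hg (g₂ := fun z => wB g z / wA g z) ((wmeas hg).2.1.div (wmeas hg).1)]
  congr 1
  ext z
  congr 1
  have hA := wA_pos hg z
  unfold wV; field_simp; ring

open Filter Topology in
lemma wV_tendsto {f : ℕ → ℝ → ℝ} {g : ℝ → ℝ} (hf : ∀ n, Measurable (f n)) (hg : Measurable g)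
    (hlim : ∀ᵐ y ∂(gaussianReal 0 1), Tendsto (fun n => f n y) atTop (𝓝 (g y))) (z : ℝ) :
    Tendsto (fun n => wV (f n) z) atTop (𝓝 (wV g z)) := by
  have hc := wp_cont_left z
  have tA : Tendsto (fun n => wA (f n) z) atTop (𝓝 (wA g z)) := by
    refine tendsto_integral_of_dominated_convergence (fun _ => 1)
      (fun n => (intA (hf n) z).1) (integrable_const _) (fun n => ae_of_all _ fun y => ?_) ?_
    · rw [Real.norm_of_nonneg (wp_pos _ _).le]; exact wp_le_one _ _
    · filter_upwards [hlim] with y hy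
      exact (hc.tendsto _).comp hy
  have tB : Tendsto (fun n => wB (f n) z) atTop (𝓝 (wB g z)) := by
    refine tendsto_integral_of_dominated_convergence (fun _ => 2 * z ^ 2 + 5)
      (fun n => (intB (hf n) z).1) (integrable_const _)
      (fun n => ae_of_all _ fun y => wp_abs_le _ _) ?_
    filter_upwards [hlim] with y hy
    exact ((hc.mul continuous_id).tendsto _).comp hy
  have tC : Tendsto (fun n => wC (f n) z) atTop (𝓝 (wC g z)) := by
    refine tendsto_integral_of_dominated_convergence (fun _ => 2 * z ^ 2 + 4)
      (fun n => (intC (hf n) z).1) (integrable_const _)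
      (fun n => ae_of_all _ fun y => wC_norm _ _) ?_
    filter_upwards [hlim] with y hy
    exact ((hc.mul (continuous_id.pow 2)).tendsto _).comp hy
  exact tC.sub ((tB.pow 2).div tA (wA_pos hg z).ne')

lemma cost_split {k : ℝ} (hk : 0 < k) {g₁ g₂ : ℝ → ℝ} (h₁ : Measurable g₁) (h₂ : Measurable g₂) :
    witsenhausenCost k g₁ g₂ =
      ∫⁻ y, ENNReal.ofReal (k * (g₁ y - y) ^ 2) ∂(gaussianReal 0 1) +
      ∫⁻ y, wh g₂ (g₁ y) ∂(gaussianReal 0 1) := by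
  rw [cost_eq hk h₁ h₂, lintegral_add_left (by fun_prop)]

open Filter in
lemma ENNReal_liminf_add (u v : ℕ → ℝ≥0∞) :
    liminf u atTop + liminf v atTop ≤ liminf (fun n => u n + v n) atTop := by
  rw [liminf_eq_iSup_iInf_of_nat, liminf_eq_iSup_iInf_of_nat, liminf_eq_iSup_iInf_of_nat]
  refine ENNReal.iSup_add_iSup_le fun i j => ?_
  refine le_iSup_of_le (max i j) (le_iInf₂ fun n hn => ?_)
  exact add_le_add (iInf₂_le n (le_trans (le_max_left _ _) hn))
    (iInf₂_le n (le_trans (le_max_right _ _) hn))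

open Filter Topology in
lemma lim_cost {k : ℝ} (hk : 0 < k) {f f₂ : ℕ → ℝ → ℝ} {g : ℝ → ℝ} (hf : ∀ n, Measurable (f n))
    (hf₂ : ∀ n, Measurable (f₂ n)) (hg : Measurable g)
    (hlim : ∀ᵐ y ∂(gaussianReal 0 1), Tendsto (fun n => f n y) atTop (𝓝 (g y))) :
    witsenhausenCost k g (fun z => wB g z / wA g z) ≤
      liminf (fun n => witsenhausenCost k (f n) (f₂ n)) atTop := by
  rw [cost_split hk hg (g₂ := fun z => wB g z / wA g z) ((wmeas hg).2.1.div (wmeas hg).1), stage2_opt hg]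
  have hV : ∀ g, Measurable g → Measurable (wV g) := fun g hg => by
    obtain ⟨a, b, c⟩ := wmeas hg
    unfold wV; fun_prop
  have h1 : ∫⁻ y, ENNReal.ofReal (k * (g y - y) ^ 2) ∂(gaussianReal 0 1) ≤
      liminf (fun n => ∫⁻ y, ENNReal.ofReal (k * (f n y - y) ^ 2) ∂(gaussianReal 0 1)) atTop := by
    refine le_trans ?_ (lintegral_liminf_le (fun n => by have := hf n; fun_prop))
    apply lintegral_mono_ae
    filter_upwards [hlim] with y hy
    refine (Tendsto.liminf_eq ?_).ge
    exact ENNReal.tendsto_ofReal (((hy.sub_const y).pow 2).const_mul k)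
  have h2 : ∫⁻ z, ENNReal.ofReal (wV g z) ≤
      liminf (fun n => ∫⁻ z, ENNReal.ofReal (wV (f n) z)) atTop := by
    refine le_trans ?_ (lintegral_liminf_le (fun n => (hV _ (hf n)).ennreal_ofReal))
    apply lintegral_mono
    intro z
    exact (ENNReal.tendsto_ofReal (wV_tendsto hf hg hlim z)).liminf_eq.ge
  refine (add_le_add h1 h2).trans (le_trans (ENNReal_liminf_add _ _) ?_)
  refine liminf_le_liminf (Eventually.of_forall fun n => ?_)
  rw [cost_split hk (hf n) (hf₂ n)]
  exact add_le_add le_rfl (stage2_ge (hf n) (hf₂ n))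

/-- For every `k > 0`, Witsenhausen's counterexample admits
an optimal policy: there is a pair of Borel measurable functions `(γ₁*, γ₂*)`
attaining the infimum of the expected cost over all pairs of Borel measurable
functions. -/
theorem witsenhausen_exists_optimal (k : ℝ) (hk : 0 < k) :
    ∃ γ₁ γ₂ : ℝ → ℝ, Measurable γ₁ ∧ Measurable γ₂ ∧
      ∀ γ₁' γ₂' : ℝ → ℝ, Measurable γ₁' → Measurable γ₂' →
        witsenhausenCost k γ₁ γ₂ ≤ witsenhausenCost k γ₁' γ₂' := by
  set I : ℝ≥0∞ := ⨅ p : {p : (ℝ → ℝ) × (ℝ → ℝ) // Measurable p.1 ∧ Measurable p.2},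
    witsenhausenCost k p.1.1 p.1.2 with hI
  have hIle : ∀ g₁ g₂ : ℝ → ℝ, Measurable g₁ → Measurable g₂ → I ≤ witsenhausenCost k g₁ g₂ :=
    fun g₁ g₂ h₁ h₂ => iInf_le (fun p : {p : (ℝ → ℝ) × (ℝ → ℝ) // Measurable p.1 ∧ Measurable p.2} =>
      witsenhausenCost k p.1.1 p.1.2) ⟨(g₁, g₂), h₁, h₂⟩
  suffices h : ∃ γ₁ γ₂ : ℝ → ℝ, Measurable γ₁ ∧ Measurable γ₂ ∧ witsenhausenCost k γ₁ γ₂ ≤ I by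
    obtain ⟨γ₁, γ₂, h₁, h₂, h⟩ := h
    exact ⟨γ₁, γ₂, h₁, h₂, fun g₁ g₂ h₁ h₂ => h.trans (hIle g₁ g₂ h₁ h₂)⟩
  by_cases hIt : I = ⊤
  · exact ⟨id, id, measurable_id, measurable_id, by simp [hIt]⟩
  have hseq : ∀ n : ℕ, ∃ f f₂ : ℝ → ℝ, Monotone f ∧ Measurable f₂ ∧
      witsenhausenCost k f f₂ ≤ I + ((n : ℝ≥0∞) + 1)⁻¹ := by
    intro n
    have hlt : I < I + ((n : ℝ≥0∞) + 1)⁻¹ := ENNReal.lt_add_right hIt (by simp)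
    obtain ⟨⟨⟨g₁, g₂⟩, h₁, h₂⟩, hp⟩ := iInf_lt_iff.1 hlt
    obtain ⟨f, hf, hle⟩ := best_response hk h₁ h₂ (lt_of_lt_of_le hp le_top)
    exact ⟨f, g₂, hf, h₂, hle.trans hp.le⟩
  choose f f₂ hf hf₂ hc using hseq
  have hC : I + 1 ≠ ⊤ := by simp [hIt]
  choose B hB using mono_bound hk hC
  have hb : ∀ n q, f n q ∈ Set.Icc (-B q) (B q) := by
    intro n q
    refine hB q (f n) (hf n) ?_
    refine le_trans ?_ ((hc n).trans (add_le_add le_rfl ?_))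
    · rw [cost_split hk (hf n).measurable (hf₂ n)]; exact le_self_add
    · rw [ENNReal.inv_le_one]; exact le_add_self
  obtain ⟨φ, hφ, g, hg, hcount⟩ := helly f hf B hb
  refine ⟨g, fun z => wB g z / wA g z, hg.measurable,
    (wmeas hg.measurable).2.1.div (wmeas hg.measurable).1, ?_⟩
  have hlim : ∀ᵐ y ∂(gaussianReal 0 1),
      Filter.Tendsto (fun n => f (φ n) y) Filter.atTop (nhds (g y)) := by
    apply (gaussianReal_absolutelyContinuous 0 one_ne_zero).ae_le
    exact hcount.measure_zero volume
  refine (lim_cost hk (fun n => (hf (φ n)).measurable) (fun n => hf₂ (φ n)) hg.measurable hlim).trans ?_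
  have ht : Filter.Tendsto (fun n => I + (((φ n : ℕ) : ℝ≥0∞) + 1)⁻¹) Filter.atTop (nhds (I + 0)) := by
    refine tendsto_const_nhds.add ?_
    have h1 : Filter.Tendsto (fun n : ℕ => ((n + 1 : ℕ) : ℝ≥0∞)⁻¹) Filter.atTop (nhds 0) :=
      ENNReal.tendsto_inv_nat_nhds_zero.comp (Filter.tendsto_add_atTop_nat 1)
    have h2 := h1.comp hφ.tendsto_atTop
    refine h2.congr fun n => ?_
    simp
  rw [add_zero] at ht
  rw [← ht.liminf_eq]
  exact Filter.liminf_le_liminf (Filter.Eventually.of_forall fun n => hc (φ n))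
end

section
/- Every analytic subset A of a Polish space X is universally measurable: for every finite Borel measure μ on X there exist Borel sets B₁ ⊆ A ⊆ B₂ with μ(B₂ \ B₁) = 0; equivalently, A belongs to the μ-completion of the Borel σ-algebra for every finite Borel measure μ. -/
open MeasureTheory

theorem aux_box_subset (b : ℕ → ℕ) (V : Set (ℕ → ℕ)) (hV : IsOpen V)
    (hK : Set.pi Set.univ (fun i => Set.Iic (b i)) ⊆ V) :
    ∃ n, {x : ℕ → ℕ | ∀ i < n, x i ≤ b i} ⊆ V := by
  by_contra! h
  have h' : ∀ n, ∃ x : ℕ → ℕ, (∀ i < n, x i ≤ b i) ∧ x ∉ V := fun n =>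
    Set.not_subset.1 (h n)
  choose x hx hxV using h'
  have hc : IsCompact (Set.pi Set.univ (fun i => Set.Iic (b i))) :=
    isCompact_univ_pi fun i => (Set.finite_Iic (b i)).isCompact
  obtain ⟨y, hy, φ, hφ, hlim⟩ := hc.tendsto_subseq
    (x := fun n i => min (x n i) (b i)) (fun n i _ => Set.mem_Iic.2 (min_le_right _ _))
  have hlim2 : Filter.Tendsto (fun n => x (φ n)) Filter.atTop (nhds y) := by
    rw [tendsto_pi_nhds] at hlim ⊢
    intro i
    refine (hlim i).congr' ?_
    filter_upwards [Filter.eventually_gt_atTop i] with n hn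
    exact min_eq_left (hx _ i (lt_of_lt_of_le hn (hφ.id_le n)))
  obtain ⟨n, hn⟩ := (hlim2.eventually (hV.mem_nhds (hK hy))).exists
  exact hxV _ hn

theorem aux_compact {X : Type*} [TopologicalSpace X] [PolishSpace X]
    [MeasurableSpace X] [BorelSpace X] (μ : Measure X) [IsFiniteMeasure μ]
    (f : (ℕ → ℕ) → X) (hf : Continuous f) (c : ENNReal) (hc : c < μ (Set.range f)) :
    ∃ K, IsCompact K ∧ K ⊆ Set.range f ∧ c ≤ μ K := by
  letI := TopologicalSpace.upgradeIsCompletelyMetrizable X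
  have step : ∀ (n : ℕ) (S : {S : Set (ℕ → ℕ) // c < μ (f '' S)}),
      ∃ m : ℕ, c < μ (f '' (S.1 ∩ {x | x n ≤ m})) := by
    rintro n ⟨S, hS⟩
    have hm : Monotone fun m : ℕ => f '' (S ∩ {x | x n ≤ m}) := by
      intro a b hab
      exact Set.image_mono (Set.inter_subset_inter_right _ fun x hx => le_trans hx hab)
    have hU : f '' S = ⋃ m : ℕ, f '' (S ∩ {x | x n ≤ m}) := by
      rw [← Set.image_iUnion, ← Set.inter_iUnion]
      congr 1
      ext x
      simp only [Set.mem_inter_iff, Set.mem_iUnion, Set.mem_setOf_eq]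
      exact ⟨fun h => ⟨h, x n, le_rfl⟩, fun h => h.1⟩
    rw [hU, hm.measure_iUnion] at hS
    exact lt_iSup_iff.1 hS
  choose g hg using step
  let S : ℕ → {S : Set (ℕ → ℕ) // c < μ (f '' S)} := fun n =>
    Nat.rec ⟨Set.univ, by simpa using hc⟩ (fun n S => ⟨S.1 ∩ {x | x n ≤ g n S}, hg n S⟩) n
  let b : ℕ → ℕ := fun n => g n (S n)
  have hS : ∀ n, (S n).1 ⊆ {x | ∀ i < n, x i ≤ b i} := by
    intro n
    induction n with
    | zero => intro x _ i hi; omega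
    | succ n ih =>
      rintro x ⟨h1, h2⟩ i hi
      rcases Nat.lt_succ_iff_lt_or_eq.1 hi with h | rfl
      · exact ih h1 i h
      · exact h2
  refine ⟨f '' Set.pi Set.univ (fun i => Set.Iic (b i)),
    (isCompact_univ_pi fun i => (Set.finite_Iic (b i)).isCompact).image hf,
    Set.image_subset_range _ _, ?_⟩
  rw [Set.measure_eq_iInf_isOpen]
  refine le_iInf fun U => le_iInf fun hKU => le_iInf fun hU => ?_
  obtain ⟨n, hn⟩ := aux_box_subset b (f ⁻¹' U) (hU.preimage hf) (Set.image_subset_iff.1 hKU)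
  exact (S n).2.le.trans (measure_mono (Set.image_subset_iff.2 ((hS n).trans hn)))

/-- Every analytic subset `A` of a Polish space `X` is
universally measurable: for every finite Borel measure `μ` on `X` there are
Borel sets `B₁ ⊆ A ⊆ B₂` with `μ (B₂ \ B₁) = 0`; equivalently, `A` belongs to
the `μ`-completion of the Borel σ-algebra for every finite Borel measure. -/
theorem analyticSet_universally_measurable
    {X : Type*} [TopologicalSpace X] [PolishSpace X]
    [MeasurableSpace X] [BorelSpace X]
    (A : Set X) (hA : MeasureTheory.AnalyticSet A) :
    ∀ μ : Measure X, IsFiniteMeasure μ →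
      (∃ B₁ B₂ : Set X, MeasurableSet B₁ ∧ MeasurableSet B₂ ∧
        B₁ ⊆ A ∧ A ⊆ B₂ ∧ μ (B₂ \ B₁) = 0) ∧
      NullMeasurableSet A μ := by
  intro μ hμ
  have key : ∃ B₁ B₂ : Set X, MeasurableSet B₁ ∧ MeasurableSet B₂ ∧
        B₁ ⊆ A ∧ A ⊆ B₂ ∧ μ (B₂ \ B₁) = 0 := by
    have inner : ∃ B₁ : Set X, MeasurableSet B₁ ∧ B₁ ⊆ A ∧ μ A ≤ μ B₁ := by
      rcases eq_or_ne (μ A) 0 with h0 | h0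
      · exact ⟨∅, MeasurableSet.empty, Set.empty_subset _, by simp [h0]⟩
      rw [AnalyticSet] at hA
      rcases hA with rfl | ⟨f, hf, rfl⟩
      · simp at h0
      obtain ⟨u, -, hu, hlim⟩ := exists_seq_strictMono_tendsto' (pos_iff_ne_zero.2 h0)
      choose K hK hKA hcK using fun n => aux_compact μ f hf (u n) (hu n).2
      refine ⟨⋃ n, K n, MeasurableSet.iUnion fun n => (hK n).measurableSet,
        Set.iUnion_subset hKA, ?_⟩
      exact le_of_tendsto' hlim fun n =>
        (hcK n).trans (measure_mono (Set.subset_iUnion K n))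
    obtain ⟨B₁, hB, hBA, hle⟩ := inner
    refine ⟨B₁, toMeasurable μ A, hB, measurableSet_toMeasurable _ _, hBA,
      subset_toMeasurable _ _, ?_⟩
    rw [measure_diff (hBA.trans (subset_toMeasurable _ _)) hB.nullMeasurableSet
      (measure_ne_top _ _), measure_toMeasurable]
    exact tsub_eq_zero_of_le hle
  refine ⟨key, ?_⟩
  obtain ⟨B₁, B₂, h1, h2, h3, h4, h5⟩ := key
  have hn : NullMeasurableSet (A \ B₁) μ :=
    NullMeasurableSet.of_null (measure_mono_null (Set.diff_subset_diff_left h4) h5)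
  rw [← Set.union_diff_cancel h3]
  exact h1.nullMeasurableSet.union hn
end
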